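/- arXiv:2204.02783 — 5 statements merged into one kernel-verified Lean document; each statement's English description precedes it below -/
import Mathlib

section
/- Let E, θ, η₀ > 0, ν ∈ (0,1), and t > (1−η₀)/θ. Let f : ℝ → ℝ be continuously differentiable on [(1−η₀)/θ, t]. Set s = (E/θ)·log(η₀+θt) and define g(s′) = f((exp(θ s′/E) − η₀)/θ). Then the Caputo fractional derivative of g of order ν at s equals the Hadamard-type operator applied to f at t: (1/Γ(1−ν)) · ∫₀ˢ (s−s′)^{−ν} · g′(s′) ds′ = Ô_ν f(t). That is, the operator Ô_ν is obtained from the Caputo derivative by the deterministic change of variable t ↦ (E/θ)·log(η₀+θt). -/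
open Real MeasureTheory Set

/-!
Put `ψ τ = (E / θ) * log (η₀ + θ * τ)`. The Hadamard kernel satisfies
`(E / θ) * log ((η₀ + θ * t) / (η₀ + θ * τ)) = ψ t - ψ τ`, so it is the Caputo kernel read in the
time `ψ`, and the prefactor `(E / θ) ^ (-ν)` absorbs the scale. Since `d(f ∘ φ) = (df) ∘ φ` for
`φ = ψ⁻¹`, substituting `τ = φ s` turns one integral into the other.
-/

variable {F : Type*} [NormedAddCommGroup F] [NormedSpace ℝ F]

theorem integral_comp_smul_deriv_comp_of_deriv_nonneg {a b : ℝ} {φ φ' k : ℝ → ℝ} {f f' : ℝ → F}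
    (hφ : ContinuousOn φ (uIcc a b)) (hφφ' : ∀ s ∈ uIoo a b, HasDerivAt φ (φ' s) s)
    (hφ' : ∀ s ∈ uIoo a b, 0 ≤ φ' s) (hf : ∀ s ∈ uIoo a b, HasDerivAt f (f' (φ s)) (φ s)) :
    ∫ s in a..b, k (φ s) • deriv (f ∘ φ) s = ∫ τ in φ a..φ b, k τ • f' τ := by
  rw [← intervalIntegral.integral_deriv_smul_comp_of_deriv_nonneg hφ hφφ' hφ']
  refine intervalIntegral.integral_congr_uIoo fun s hs ↦ ?_
  simp only [((hf s hs).scomp s (hφφ' s hs)).deriv, Function.comp_apply, smul_comm (φ' s)]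

/-- The time change `ψ` of the modified Maxwell model, under which the Hadamard-type operator
becomes the Caputo derivative. -/
noncomputable def maxwellClock (E θ η₀ τ : ℝ) : ℝ :=
  (E / θ) * log (η₀ + θ * τ)

/-- The inverse `φ = ψ⁻¹` of the time change `maxwellClock`, recovering physical time. -/
noncomputable def maxwellClockInv (E θ η₀ s : ℝ) : ℝ :=
  (exp (θ * s / E) - η₀) / θ

section MaxwellClock

variable {E θ η₀ : ℝ}

theorem maxwellClockInv_zero : maxwellClockInv E θ η₀ 0 = (1 - η₀) / θ := by
  simp [maxwellClockInv]

theorem maxwellClock_maxwellClockInv (hE : E ≠ 0) (hθ : θ ≠ 0) (s : ℝ) :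
    maxwellClock E θ η₀ (maxwellClockInv E θ η₀ s) = s := by
  have hexp : η₀ + θ * maxwellClockInv E θ η₀ s = exp (θ * s / E) := by
    rw [maxwellClockInv, mul_div_cancel₀ _ hθ, add_sub_cancel]
  rw [maxwellClock, hexp, log_exp]
  field_simp

theorem maxwellClockInv_maxwellClock (hE : E ≠ 0) (hθ : θ ≠ 0) {τ : ℝ} (hτ : 0 < η₀ + θ * τ) :
    maxwellClockInv E θ η₀ (maxwellClock E θ η₀ τ) = τ := by
  have hlog : θ * maxwellClock E θ η₀ τ / E = log (η₀ + θ * τ) := by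
    rw [maxwellClock]
    field_simp
  rw [maxwellClockInv, hlog, exp_log hτ, add_sub_cancel_left, mul_div_cancel_left₀ _ hθ]

theorem strictMono_maxwellClockInv (hE : 0 < E) (hθ : 0 < θ) :
    StrictMono (maxwellClockInv E θ η₀) := fun s₁ s₂ hs ↦ by
  unfold maxwellClockInv
  gcongr

theorem hasDerivAt_maxwellClockInv (hθ : θ ≠ 0) (s : ℝ) :
    HasDerivAt (maxwellClockInv E θ η₀) (exp (θ * s / E) / E) s := by
  have hderiv := ((((hasDerivAt_id s).const_mul θ).div_const E).exp.sub_const η₀).div_const θ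
  have hdiv : exp (θ * s / E) * (θ * 1 / E) / θ = exp (θ * s / E) / E := by field_simp
  exact hdiv ▸ hderiv

theorem maxwellClock_sub_maxwellClock {t τ : ℝ} (ht : η₀ + θ * t ≠ 0) (hτ : η₀ + θ * τ ≠ 0) :
    maxwellClock E θ η₀ t - maxwellClock E θ η₀ τ =
      (E / θ) * log ((η₀ + θ * t) / (η₀ + θ * τ)) := by
  rw [maxwellClock, maxwellClock, log_div ht hτ, mul_sub]

theorem rpow_maxwellClock_sub_maxwellClock (hE : 0 ≤ E) (hθ : 0 ≤ θ) {t τ : ℝ}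
    (hτ : 0 < η₀ + θ * τ) (hτt : τ ≤ t) (p : ℝ) :
    (maxwellClock E θ η₀ t - maxwellClock E θ η₀ τ) ^ p =
      (E / θ) ^ p * log ((η₀ + θ * t) / (η₀ + θ * τ)) ^ p := by
  have hle : η₀ + θ * τ ≤ η₀ + θ * t := by gcongr
  have hlog : 0 ≤ log ((η₀ + θ * t) / (η₀ + θ * τ)) := log_nonneg ((one_le_div hτ).2 hle)
  rw [maxwellClock_sub_maxwellClock (hτ.trans_le hle).ne' hτ.ne',
    mul_rpow (div_nonneg hE hθ) hlog]

theorem integral_rpow_maxwellClock_sub_maxwellClock_smul (hE : 0 ≤ E) (hθ : 0 < θ) {a t : ℝ}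
    (ha : 0 ≤ η₀ + θ * a) (hat : a ≤ t) (p : ℝ) (g : ℝ → F) :
    ∫ τ in a..t, (maxwellClock E θ η₀ t - maxwellClock E θ η₀ τ) ^ p • g τ =
      (E / θ) ^ p • ∫ τ in a..t, log ((η₀ + θ * t) / (η₀ + θ * τ)) ^ p • g τ := by
  rw [← intervalIntegral.integral_smul]
  refine intervalIntegral.integral_congr_Ioo_of_le hat fun τ hτ ↦ ?_
  have hpos : 0 < η₀ + θ * τ := ha.trans_lt (by gcongr; exact hτ.1)
  simp only [rpow_maxwellClock_sub_maxwellClock hE hθ.le hpos hτ.2.le, mul_smul]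

theorem integral_smul_deriv_comp_maxwellClockInv (hE : 0 < E) (hθ : 0 < θ) {a b : ℝ} {k : ℝ → ℝ}
    {f f' : ℝ → F}
    (hf : ∀ τ ∈ uIoo (maxwellClockInv E θ η₀ a) (maxwellClockInv E θ η₀ b),
      HasDerivAt f (f' τ) τ) :
    ∫ s in a..b, k s • deriv (f ∘ maxwellClockInv E θ η₀) s =
      ∫ τ in maxwellClockInv E θ η₀ a..maxwellClockInv E θ η₀ b,
        k (maxwellClock E θ η₀ τ) • f' τ := by
  have hφ := hasDerivAt_maxwellClockInv (E := E) (η₀ := η₀) hθ.ne'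
  have hmono := strictMono_maxwellClockInv (η₀ := η₀) hE hθ
  rw [← integral_comp_smul_deriv_comp_of_deriv_nonneg (f := f)
    (fun s _ ↦ (hφ s).continuousAt.continuousWithinAt) (fun s _ ↦ hφ s)
    (fun s _ ↦ by positivity)]
  · simp only [maxwellClock_maxwellClockInv hE.ne' hθ.ne']
  · rw [uIoo, ← hmono.monotone.map_inf, ← hmono.monotone.map_sup] at hf
    exact fun s hs ↦ hf _ (hmono.mapsTo_Ioo hs)

end MaxwellClock

theorem hadamard_eq_caputo_time_change_general [CompleteSpace F] (E θ η₀ ν t : ℝ)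
    (f f' : ℝ → F) (hE : 0 < E) (hθ : 0 < θ) (ht : (1 - η₀) / θ < t)
    (hf : ∀ τ ∈ Ioo ((1 - η₀) / θ) t, HasDerivAt f (f' τ) τ) :
    (1 / Gamma (1 - ν)) •
      ∫ s' in (0 : ℝ)..((E / θ) * log (η₀ + θ * t)),
        ((E / θ) * log (η₀ + θ * t) - s') ^ (-ν) •
          deriv (fun s'' : ℝ ↦ f ((exp (θ * s'' / E) - η₀) / θ)) s' =
    ((1 / Gamma (1 - ν)) * (E / θ) ^ (-ν)) •
      ∫ τ in ((1 - η₀) / θ)..t, log ((η₀ + θ * t) / (η₀ + θ * τ)) ^ (-ν) • f' τ := by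
  have ha : η₀ + θ * ((1 - η₀) / θ) = 1 := by
    rw [mul_div_cancel₀ _ hθ.ne', add_sub_cancel]
  have hpos : 0 < η₀ + θ * t := by
    rw [div_lt_iff₀' hθ] at ht
    linarith
  have hφt := maxwellClockInv_maxwellClock hE.ne' hθ.ne' hpos
  have hsubst : ∫ s in (0 : ℝ)..maxwellClock E θ η₀ t,
      (maxwellClock E θ η₀ t - s) ^ (-ν) • deriv (f ∘ maxwellClockInv E θ η₀) s =
        ∫ τ in (1 - η₀) / θ..t,
          (maxwellClock E θ η₀ t - maxwellClock E θ η₀ τ) ^ (-ν) • f' τ := by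
    rw [← uIoo_of_le ht.le, ← maxwellClockInv_zero (E := E), ← hφt] at hf
    have hchange := integral_smul_deriv_comp_maxwellClockInv
      (k := fun s ↦ (maxwellClock E θ η₀ t - s) ^ (-ν)) hE hθ hf
    rwa [maxwellClockInv_zero, hφt] at hchange
  rw [mul_smul, ← integral_rpow_maxwellClock_sub_maxwellClock_smul hE.le hθ
    (ha.symm ▸ zero_le_one) ht.le, ← hsubst]
  rfl

/-- The Hadamard-type operator `Ô_ν` is obtained from the Caputo fractional
derivative by the deterministic change of variable `t ↦ (E/θ)·log(η₀+θt)`. -/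
theorem hadamard_eq_caputo_time_change (E θ η₀ ν t : ℝ) (f f' : ℝ → ℝ)
    (hE : 0 < E) (hθ : 0 < θ) (hη : 0 < η₀)
    (hν : ν ∈ Set.Ioo (0:ℝ) 1) (ht : (1 - η₀) / θ < t)
    (hf : ∀ τ ∈ Set.Icc ((1 - η₀) / θ) t, HasDerivAt f (f' τ) τ)
    (hf' : ContinuousOn f' (Set.Icc ((1 - η₀) / θ) t)) :
    (1 / Real.Gamma (1 - ν)) *
      ∫ s' in (0:ℝ)..((E / θ) * Real.log (η₀ + θ * t)),
        ((E / θ) * Real.log (η₀ + θ * t) - s') ^ (-ν) *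
          deriv (fun s'' : ℝ => f ((Real.exp (θ * s'' / E) - η₀) / θ)) s' =
    (1 / Real.Gamma (1 - ν)) * (E / θ) ^ (-ν) *
      ∫ τ in ((1 - η₀) / θ)..t,
        (Real.log ((η₀ + θ * t) / (η₀ + θ * τ))) ^ (-ν) * f' τ := by
  simpa only [smul_eq_mul] using hadamard_eq_caputo_time_change_general E θ η₀ ν t f f' hE hθ ht
    fun τ hτ ↦ hf τ (Ioo_subset_Icc_self hτ)
end

section
/- Let E, θ, η₀ > 0, ν ∈ (0,1), and define f(t) = E_ν(−(E/θ)^ν · (log(η₀+θt))^ν) = ∑_{k=0}^∞ (−(E/θ)^ν (log(η₀+θt))^ν)^k / Γ(νk+1). Then f is an eigenfunction of the Hadamard-type fractional operator with eigenvalue −1: for every t > (1−η₀)/θ, Ô_ν f(t) = −f(t), i.e. (1/Γ(1−ν)) · (E/θ)^{−ν} · ∫_{(1−η₀)/θ}^{t} (log((η₀+θt)/(η₀+θτ)))^{−ν} · f′(τ) dτ = −f(t). -/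
open Real MeasureTheory Set

/-- The Mittag-Leffler function `E_ν(x) = ∑_{k=0}^∞ x^k / Γ(νk+1)`. -/
noncomputable def mittagLeffler (ν x : ℝ) : ℝ :=
  ∑' k : ℕ, x ^ k / Real.Gamma (ν * k + 1)

/-!
In the variable `u = log (η₀ + θ τ)` the Hadamard kernel becomes the convolution kernel
`(x - u) ^ (-ν)`, so `Ô_ν` is `(E / θ) ^ (-ν)` times the Caputo derivative based at `u = 0`. That
derivative sends `u ^ (ν (k + 1)) / Γ (ν (k + 1) + 1)` to `u ^ (ν k) / Γ (ν k + 1)`, by the Beta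
integral, and hence shifts the series of `E_ν (l u ^ ν)`, multiplying it by `l`. Sum and integral
may be exchanged because the integrals of the absolute values are again the terms of a
Mittag-Leffler series.
-/

/-- The Caputo fractional derivative of order `ν ∈ (0, 1)` with base point `0`, for functions on
the half-line `(0, ∞)`. -/
noncomputable def caputoDeriv (ν : ℝ) (f : ℝ → ℝ) (x : ℝ) : ℝ :=
  1 / Real.Gamma (1 - ν) * ∫ u in (0 : ℝ)..x, (x - u) ^ (-ν) * deriv f u

/-- The Hadamard-type fractional operator `Ô_ν` of the modified Maxwell model, with the cancelling
factors `(η₀ + θτ) / E` and `E / (η₀ + θτ)` of the kernel left out. -/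
noncomputable def hadamardMaxwellDeriv (E θ η₀ ν : ℝ) (f : ℝ → ℝ) (t : ℝ) : ℝ :=
  1 / Real.Gamma (1 - ν) * (E / θ) ^ (-ν) *
    ∫ τ in ((1 - η₀) / θ)..t,
      Real.log ((η₀ + θ * t) / (η₀ + θ * τ)) ^ (-ν) * deriv f τ

theorem hasDerivAt_tsum_mul_pow {𝕜 : Type*} [NontriviallyNormedField 𝕜] [CompleteSpace 𝕜]
    {a : ℕ → 𝕜} (ha : ∀ r : NNReal, Summable fun k ↦ ‖a k‖ * (r : ℝ) ^ k) (x : 𝕜) :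
    HasDerivAt (fun y ↦ ∑' k, a k * y ^ k) (∑' k : ℕ, (k + 1) * a (k + 1) * x ^ k) x := by
  set p := FormalMultilinearSeries.ofScalars 𝕜 a
  have radius_eq_top : p.radius = ⊤ :=
    p.radius_eq_top_of_summable_norm (by simpa [p] using ha)
  have sum_eq : p.sum = fun y ↦ ∑' k, a k * y ^ k := by
    ext y
    simp [p, FormalMultilinearSeries.sum, mul_comm]
  have summable_derivSeries : Summable fun k ↦ p.derivSeries k fun _ ↦ x :=
    p.derivSeries.summable (by simp [top_unique (radius_eq_top ▸ p.radius_le_radius_derivSeries)])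
  have derivSeries_sum_eq : p.derivSeries.sum x 1 = ∑' k : ℕ, (k + 1) * a (k + 1) * x ^ k := by
    rw [FormalMultilinearSeries.sum, ← ContinuousLinearMap.apply_apply (1 : 𝕜) (∑' _, _),
      ContinuousLinearMap.map_tsum _ summable_derivSeries]
    refine tsum_congr fun k ↦ ?_
    rw [ContinuousLinearMap.apply_apply, FormalMultilinearSeries.apply_eq_pow_smul_coeff,
      smul_apply, FormalMultilinearSeries.derivSeries_coeff_one,
      FormalMultilinearSeries.coeff_ofScalars, nsmul_eq_mul, smul_eq_mul, mul_comm]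
    push_cast
    rfl
  rw [← sum_eq, ← derivSeries_sum_eq]
  exact (FormalMultilinearSeries.hasFDerivAt_sum (by simp [radius_eq_top])).hasDerivAt

theorem rpow_mul_exp_neg_le_Gamma_add_one {M a : ℝ} (hM : 0 ≤ M) (ha : 0 ≤ a) :
    M ^ a * Real.exp (-M) ≤ Real.Gamma (a + 1) := by
  have hsub : Ioi M ⊆ Ioi (0 : ℝ) := Ioi_subset_Ioi hM
  have hint : IntegrableOn (fun x ↦ Real.exp (-x) * x ^ a) (Ioi 0) := by
    simpa using Real.GammaIntegral_convergent (s := a + 1) (by linarith)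
  calc M ^ a * Real.exp (-M)
      = ∫ x in Ioi M, Real.exp (-x) * M ^ a := by
        rw [integral_mul_const, integral_exp_neg_Ioi, mul_comm]
    _ ≤ ∫ x in Ioi M, Real.exp (-x) * x ^ a := by
        refine setIntegral_mono_on ((integrableOn_exp_neg_Ioi M).mul_const _)
          (hint.mono_set hsub) measurableSet_Ioi fun x hx ↦ ?_
        have : M ≤ x := le_of_lt hx
        gcongr
    _ ≤ ∫ x in Ioi 0, Real.exp (-x) * x ^ a := by
        refine setIntegral_mono_set hint ?_ hsub.eventuallyLE
        filter_upwards [self_mem_ae_restrict measurableSet_Ioi] with x hx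
        exact mul_nonneg (Real.exp_nonneg _) (Real.rpow_nonneg (le_of_lt hx) _)
    _ = Real.Gamma (a + 1) := by
        rw [Real.Gamma_eq_integral (by linarith), add_sub_cancel_right]

theorem integral_sub_rpow_mul_rpow {s v x : ℝ} (hs : 0 < s) (hv : 0 < v) (hx : 0 < x) :
    ∫ u in (0 : ℝ)..x, (x - u) ^ (v - 1) * u ^ (s - 1) =
      x ^ (s + v - 1) * ProbabilityTheory.beta s v := by
  have beta_eq : (ProbabilityTheory.beta s v : ℂ) = Complex.betaIntegral s v := by
    rw [Complex.betaIntegral_eq_Gamma_mul_div _ _ (by simpa) (by simpa), ProbabilityTheory.beta,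
      ← Complex.ofReal_add]
    simp only [Complex.Gamma_ofReal, Complex.ofReal_mul, Complex.ofReal_div]
  apply Complex.ofReal_injective
  rw [← intervalIntegral.integral_ofReal, Complex.ofReal_mul, beta_eq, Complex.ofReal_cpow hx.le]
  push_cast
  rw [← Complex.betaIntegral_scaled s v hx]
  refine intervalIntegral.integral_congr_Ioo_of_le hx.le fun u hu ↦ ?_
  rw [Complex.ofReal_cpow hu.1.le, Complex.ofReal_cpow (sub_nonneg.2 hu.2.le), mul_comm]
  push_cast
  rfl

theorem intervalIntegrable_sub_rpow_mul_rpow {s v x : ℝ} (hs : 0 < s) (hv : 0 < v) (hx : 0 < x) :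
    IntervalIntegrable (fun u ↦ (x - u) ^ (v - 1) * u ^ (s - 1)) volume 0 x := by
  apply intervalIntegral.intervalIntegrable_of_integral_ne_zero
  rw [integral_sub_rpow_mul_rpow hs hv hx]
  exact (mul_pos (Real.rpow_pos_of_pos hx _) (ProbabilityTheory.beta_pos hs hv)).ne'

theorem integral_sub_rpow_mul_tsum_mul_rpow {ι : Type*} [Countable ι] {a s : ι → ℝ} {v x : ℝ}
    (hs : ∀ i, 0 < s i) (hv : 0 < v) (hx : 0 < x)
    (hsum : Summable fun i ↦ a i * (x ^ (s i + v - 1) * ProbabilityTheory.beta (s i) v)) :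
    ∫ u in (0 : ℝ)..x, (x - u) ^ (v - 1) * ∑' i, a i * u ^ (s i - 1) =
      ∑' i, a i * (x ^ (s i + v - 1) * ProbabilityTheory.beta (s i) v) := by
  set F : ι → ℝ → ℝ := fun i u ↦ a i * ((x - u) ^ (v - 1) * u ^ (s i - 1)) with hF
  have integral_kernel (c : ℝ) (i : ι) :
      ∫ u in Ioc 0 x, c * ((x - u) ^ (v - 1) * u ^ (s i - 1)) =
        c * (x ^ (s i + v - 1) * ProbabilityTheory.beta (s i) v) := by
    rw [integral_const_mul, ← intervalIntegral.integral_of_le hx.le,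
      integral_sub_rpow_mul_rpow (hs i) hv hx]
  have integrable_F (i : ι) : Integrable (F i) (volume.restrict (Ioc 0 x)) :=
    (intervalIntegrable_sub_rpow_mul_rpow (hs i) hv hx).1.const_mul _
  have integral_norm_F (i : ι) : ∫ u in Ioc 0 x, ‖F i u‖ =
      ‖a i * (x ^ (s i + v - 1) * ProbabilityTheory.beta (s i) v)‖ := by
    have beta_pos := ProbabilityTheory.beta_pos (hs i) hv
    rw [norm_mul, Real.norm_of_nonneg (r := _ * _) (by positivity), ← integral_kernel]
    refine setIntegral_congr_fun measurableSet_Ioc fun u hu ↦ ?_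
    have hu_pos : 0 < u := hu.1
    have hxu : 0 ≤ x - u := sub_nonneg.2 hu.2
    simp only [hF]
    rw [norm_mul, Real.norm_of_nonneg (r := _ * _) (by positivity)]
  calc ∫ u in (0 : ℝ)..x, (x - u) ^ (v - 1) * ∑' i, a i * u ^ (s i - 1)
      = ∫ u in Ioc 0 x, ∑' i, F i u := by
        simp only [hF, intervalIntegral.integral_of_le hx.le, ← tsum_mul_left, mul_left_comm]
    _ = ∑' i, ∫ u in Ioc 0 x, F i u :=
        (integral_tsum_of_summable_integral_norm integrable_F
          (by simpa only [integral_norm_F] using hsum.norm)).symm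
    _ = ∑' i, a i * (x ^ (s i + v - 1) * ProbabilityTheory.beta (s i) v) := by
        simp only [hF, integral_kernel]

section MittagLeffler

variable {ν : ℝ}

theorem summable_mittagLeffler (hν : 0 < ν) (x : ℝ) :
    Summable fun k : ℕ ↦ x ^ k / Real.Gamma (ν * k + 1) := by
  set M : ℝ := (2 * |x|) ^ ν⁻¹
  have Gamma_ge (k : ℕ) : (2 * |x|) ^ k * Real.exp (-M) ≤ Real.Gamma (ν * k + 1) := by
    have h := rpow_mul_exp_neg_le_Gamma_add_one (M := M) (a := ν * k) (by positivity)
      (by positivity)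
    rwa [Real.rpow_mul (by positivity), Real.rpow_inv_rpow (by positivity) hν.ne',
      Real.rpow_natCast] at h
  refine .of_norm_bounded (summable_geometric_two.mul_left (Real.exp M)) fun k ↦ ?_
  have Gamma_pos : 0 < Real.Gamma (ν * k + 1) := Real.Gamma_pos_of_pos (by positivity)
  rw [norm_div, norm_pow, Real.norm_eq_abs, Real.norm_of_nonneg Gamma_pos.le,
    div_le_iff₀ Gamma_pos]
  calc |x| ^ k = Real.exp M * (1 / 2) ^ k * ((2 * |x|) ^ k * Real.exp (-M)) := by
        rw [Real.exp_neg, mul_pow, one_div, inv_pow]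
        field_simp
    _ ≤ Real.exp M * (1 / 2) ^ k * Real.Gamma (ν * k + 1) := by gcongr; exact Gamma_ge k

theorem hasDerivAt_mittagLeffler (hν : 0 < ν) (x : ℝ) :
    HasDerivAt (mittagLeffler ν) (∑' k : ℕ, x ^ k / (ν * Real.Gamma (ν * (k + 1)))) x := by
  have summable_norm (r : NNReal) :
      Summable fun k : ℕ ↦ ‖(Real.Gamma (ν * k + 1))⁻¹‖ * (r : ℝ) ^ k := by
    refine (summable_mittagLeffler hν r).congr fun k ↦ ?_
    have := Real.Gamma_pos_of_pos (show 0 < ν * (k : ℝ) + 1 by positivity)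
    rw [norm_inv, Real.norm_of_nonneg this.le, div_eq_inv_mul]
  have mittagLeffler_eq :
      mittagLeffler ν = fun y ↦ ∑' k : ℕ, (Real.Gamma (ν * k + 1))⁻¹ * y ^ k := by
    ext y
    simp only [mittagLeffler, div_eq_inv_mul]
  rw [mittagLeffler_eq]
  refine (hasDerivAt_tsum_mul_pow summable_norm x).congr_deriv (tsum_congr fun k ↦ ?_)
  have arg_pos : 0 < ν * ((k : ℝ) + 1) := by positivity
  have := (Real.Gamma_pos_of_pos arg_pos).ne'
  push_cast
  rw [Real.Gamma_add_one arg_pos.ne']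
  field_simp

theorem hasDerivAt_mittagLeffler_mul_rpow (hν : 0 < ν) (l : ℝ) {u : ℝ} (hu : 0 < u) :
    HasDerivAt (fun u ↦ mittagLeffler ν (l * u ^ ν))
      (∑' k : ℕ, l ^ (k + 1) / Real.Gamma (ν * (k + 1)) * u ^ (ν * (k + 1) - 1)) u := by
  have h := (hasDerivAt_mittagLeffler hν (l * u ^ ν)).comp u
    ((Real.hasDerivAt_rpow_const (Or.inl hu.ne')).const_mul l)
  rw [← tsum_mul_right] at h
  refine h.congr_deriv (tsum_congr fun k ↦ ?_)
  have rpow_eq : u ^ (ν * (k + 1) - 1) = (u ^ ν) ^ k * u ^ (ν - 1) := by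
    rw [← Real.rpow_mul_natCast hu.le, ← Real.rpow_add hu]
    ring_nf
  rw [rpow_eq, mul_pow, pow_succ]
  field_simp

theorem caputoDeriv_mittagLeffler_mul_rpow (hν : ν ∈ Ioo (0 : ℝ) 1) (l : ℝ) {x : ℝ} (hx : 0 < x) :
    caputoDeriv ν (fun u ↦ mittagLeffler ν (l * u ^ ν)) x = l * mittagLeffler ν (l * x ^ ν) := by
  obtain ⟨hν0, hν1⟩ := hν
  have Gamma_ne_zero : Real.Gamma (1 - ν) ≠ 0 := (Real.Gamma_pos_of_pos (sub_pos.2 hν1)).ne'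
  have term_eq (k : ℕ) : l ^ (k + 1) / Real.Gamma (ν * (k + 1)) *
      (x ^ (ν * (k + 1) + (1 - ν) - 1) * ProbabilityTheory.beta (ν * (k + 1)) (1 - ν)) =
      l * Real.Gamma (1 - ν) * ((l * x ^ ν) ^ k / Real.Gamma (ν * k + 1)) := by
    have := (Real.Gamma_pos_of_pos (show 0 < ν * ((k : ℝ) + 1) by positivity)).ne'
    rw [ProbabilityTheory.beta, show ν * ((k : ℝ) + 1) + (1 - ν) = ν * k + 1 by ring,
      add_sub_cancel_right, Real.rpow_mul_natCast hx.le, mul_pow, pow_succ]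
    field_simp
  have integral_series_eq := integral_sub_rpow_mul_tsum_mul_rpow
    (a := fun k : ℕ ↦ l ^ (k + 1) / Real.Gamma (ν * (k + 1))) (s := fun k : ℕ ↦ ν * (k + 1))
    (fun k ↦ by positivity) (sub_pos.2 hν1) hx
    (by simpa only [term_eq] using (summable_mittagLeffler hν0 _).mul_left _)
  simp only [term_eq, tsum_mul_left, sub_sub_cancel_left] at integral_series_eq
  have integral_eq : ∫ u in (0 : ℝ)..x,
      (x - u) ^ (-ν) * deriv (fun u ↦ mittagLeffler ν (l * u ^ ν)) u =
      l * Real.Gamma (1 - ν) * mittagLeffler ν (l * x ^ ν) := by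
    rw [mittagLeffler, ← integral_series_eq]
    refine intervalIntegral.integral_congr_Ioo_of_le hx.le fun u hu ↦ ?_
    simp only [(hasDerivAt_mittagLeffler_mul_rpow hν0 l hu.1).deriv]
  rw [caputoDeriv, integral_eq, one_div, mul_comm l, mul_assoc, inv_mul_cancel_left₀ Gamma_ne_zero]

end MittagLeffler

section HadamardMaxwell

theorem hasDerivAt_log_add_mul {θ η τ : ℝ} (h : η + θ * τ ≠ 0) :
    HasDerivAt (fun τ ↦ Real.log (η + θ * τ)) (θ / (η + θ * τ)) τ := by
  simpa using (((hasDerivAt_id' τ).const_mul θ).const_add η).log h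

theorem integral_comp_log_add_mul {θ η a b : ℝ} (hθ : 0 ≤ θ) (ha : 0 < η + θ * a) (hab : a ≤ b)
    (k : ℝ → ℝ) :
    ∫ τ in a..b, k (Real.log (η + θ * τ)) * (θ / (η + θ * τ)) =
      ∫ u in Real.log (η + θ * a)..Real.log (η + θ * b), k u := by
  have arg_pos {τ : ℝ} (hτ : a ≤ τ) : 0 < η + θ * τ := by
    have : θ * a ≤ θ * τ := by gcongr
    linarith
  refine intervalIntegral.integral_comp_mul_deriv_of_deriv_nonneg (g := k)
    (f := fun τ ↦ Real.log (η + θ * τ)) (fun τ hτ ↦ ?_) (fun τ hτ ↦ ?_) (fun τ hτ ↦ ?_)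
  · rw [uIcc_of_le hab] at hτ
    exact (hasDerivAt_log_add_mul (arg_pos hτ.1).ne').continuousAt.continuousWithinAt
  · rw [min_eq_left hab] at hτ
    exact hasDerivAt_log_add_mul (arg_pos hτ.1.le).ne'
  · rw [min_eq_left hab] at hτ
    exact div_nonneg hθ (arg_pos hτ.1.le).le

variable {E θ η₀ ν t : ℝ}

theorem one_lt_add_mul_of_div_lt (hθ : 0 < θ) (ht : (1 - η₀) / θ < t) : 1 < η₀ + θ * t := by
  rw [div_lt_iff₀' hθ] at ht
  linarith

theorem hadamardMaxwellDeriv_comp_log (hθ : 0 < θ) (ht : (1 - η₀) / θ < t) {g : ℝ → ℝ}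
    (hg : DifferentiableOn ℝ g (Ioi 0)) :
    hadamardMaxwellDeriv E θ η₀ ν (fun τ ↦ g (Real.log (η₀ + θ * τ))) t =
      (E / θ) ^ (-ν) * caputoDeriv ν g (Real.log (η₀ + θ * t)) := by
  have arg_left : η₀ + θ * ((1 - η₀) / θ) = 1 := by
    field_simp
    ring
  have change_of_variables := integral_comp_log_add_mul hθ.le (arg_left ▸ one_pos) ht.le
    fun u ↦ (Real.log (η₀ + θ * t) - u) ^ (-ν) * deriv g u
  rw [arg_left, Real.log_one] at change_of_variables
  rw [hadamardMaxwellDeriv, caputoDeriv, ← change_of_variables, mul_left_comm, mul_assoc]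
  congr 2
  refine intervalIntegral.integral_congr_Ioo_of_le ht.le fun τ hτ ↦ ?_
  have arg_gt : 1 < η₀ + θ * τ := one_lt_add_mul_of_div_lt hθ hτ.1
  have deriv_comp : deriv (fun τ ↦ g (Real.log (η₀ + θ * τ))) τ =
      deriv g (Real.log (η₀ + θ * τ)) * (θ / (η₀ + θ * τ)) :=
    ((hg.differentiableAt (Ioi_mem_nhds (Real.log_pos arg_gt))).hasDerivAt.comp τ
      (hasDerivAt_log_add_mul (one_pos.trans arg_gt).ne')).deriv
  simp only [deriv_comp, mul_assoc,
    Real.log_div (one_pos.trans (one_lt_add_mul_of_div_lt hθ ht)).ne' (one_pos.trans arg_gt).ne']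

theorem mittagLeffler_eigenfunction_general (hE : 0 < E) (hθ : 0 < θ)
    (hν : ν ∈ Ioo (0 : ℝ) 1) (l : ℝ) (ht : (1 - η₀) / θ < t) :
    hadamardMaxwellDeriv E θ η₀ ν
        (fun τ ↦ mittagLeffler ν (l * ((E / θ) ^ ν * Real.log (η₀ + θ * τ) ^ ν))) t =
      l * mittagLeffler ν (l * ((E / θ) ^ ν * Real.log (η₀ + θ * t) ^ ν)) := by
  have log_pos : 0 < Real.log (η₀ + θ * t) := Real.log_pos (one_lt_add_mul_of_div_lt hθ ht)
  have differentiableOn : DifferentiableOn ℝ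
      (fun u ↦ mittagLeffler ν (l * (E / θ) ^ ν * u ^ ν)) (Ioi 0) := fun u hu ↦
    (hasDerivAt_mittagLeffler_mul_rpow hν.1 _ hu).differentiableAt.differentiableWithinAt
  simp only [← mul_assoc]
  rw [hadamardMaxwellDeriv_comp_log hθ ht differentiableOn,
    caputoDeriv_mittagLeffler_mul_rpow hν _ log_pos, Real.rpow_neg (by positivity)]
  field_simp

end HadamardMaxwell

/-- `f(t) = E_ν(−(E/θ)^ν (log(η₀+θt))^ν)` is an eigenfunction of the
Hadamard-type fractional operator with eigenvalue `−1`. -/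
theorem mittagLeffler_eigenfunction (E θ η₀ ν : ℝ)
    (hE : 0 < E) (hθ : 0 < θ) (hη : 0 < η₀) (hν : ν ∈ Set.Ioo (0:ℝ) 1)
    (f : ℝ → ℝ)
    (hf : f = fun t : ℝ =>
      mittagLeffler ν (-((E / θ) ^ ν * (Real.log (η₀ + θ * t)) ^ ν))) :
    ∀ t : ℝ, (1 - η₀) / θ < t →
      (1 / Real.Gamma (1 - ν)) * (E / θ) ^ (-ν) *
        ∫ τ in ((1 - η₀) / θ)..t,
          (Real.log ((η₀ + θ * t) / (η₀ + θ * τ))) ^ (-ν) * deriv f τ = -f t := by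
  intro t ht
  simpa only [hf, hadamardMaxwellDeriv, neg_one_mul] using
    mittagLeffler_eigenfunction_general hE hθ hν (-1) ht
end

section
/- For every ν ∈ (0,1) and every integer N ≥ 1, the Mittag-Leffler function of negative argument admits the asymptotic expansion E_ν(−x) ∼ −∑_{n=1}^∞ (−1)^{n−1} x^{−n} / Γ(1−νn) as x → +∞, in the sense that x^N · (E_ν(−x) − ∑_{n=1}^{N} (−1)^{n} x^{−n} / Γ(1−νn) · (−1)) → 0 as x → +∞; that is, E_ν(−x) = ∑_{n=1}^{N} (−1)^{n−1} x^{−n}/Γ(1−νn) + o(x^{−N}) as x → +∞ (with the convention that 1/Γ(1−νn) = 0 when 1−νn is a nonpositive integer). -/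
open Real Filter Finset

/-!
Hankel's formula writes `1 / Γ(1 + s)` as a contour integral of `e ^ t * t ^ (-s - 1)`. Put
`J s = (2πi)⁻¹ ∫ e ^ t * t ^ (-s - 1) / (t ^ ν + x) dt` over the same contour. Clearing the
denominator gives the single recursion `J (s - ν) + x * J s = 1 / Γ(1 + s)`. Iterated upwards from
`s = 0` it expands `J (-ν)` in powers of `-x`, with a remainder that vanishes when the contour is
taken far enough out, so `J (-ν) = E_ν (-x)`. Iterated downwards from `s = -ν` it expands the same
`J (-ν)` in powers of `x⁻¹`, with remainder `(-1) ^ N * x ^ (-N) * J (-(N + 1) ν)`. When the rays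
of the contour have angle `± β` with `π / 2 < β` and `ν β < π`, the sector they bound contains no
zero of `t ^ ν + x`: one has `|t ^ ν + x| ≥ x cos (ν β / 2)`, hence `J s = O(x⁻¹)`.
-/

open MeasureTheory Topology
open Complex (I)

section HankelContour

variable {F G : ℂ → ℂ} {β γ a : ℝ}

/-- The integral of `F` along the horizontal ray from `a + θ i` to `+∞ + θ i`. -/
noncomputable def rayIntegral (a θ : ℝ) (F : ℂ → ℂ) : ℂ :=
  ∫ u in Set.Ioi a, F (u + θ * I)

/-- The integral of `F`, divided by `2πi`, along the Hankel contour in the logarithmic coordinate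
`w = log t`: in from `+∞ - β i` to `a - β i`, up to `a + β i`, and out to `+∞ + β i`. In the
coordinate `t` this is the classical contour around the branch cut, with rays of angle `± β` and an
arc of radius `exp a`; passing to `w` removes the branch cut. -/
noncomputable def hankelIntegral (β a : ℝ) (F : ℂ → ℂ) : ℂ :=
  (2 * π * I)⁻¹ *
    (rayIntegral a β F - rayIntegral a (-β) F + I * ∫ θ in (-β)..β, F (a + θ * I))

/-- The integral of `‖F‖`, divided by `2π`, with respect to arc length along the contour of
`hankelIntegral`. -/
noncomputable def hankelNorm (β a : ℝ) (F : ℂ → ℂ) : ℝ :=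
  (2 * π)⁻¹ *
    ((∫ u in Set.Ioi a, ‖F (u + β * I)‖) + (∫ u in Set.Ioi a, ‖F (u + (-β : ℝ) * I)‖) +
      ∫ θ in (-β)..β, ‖F (a + θ * I)‖)

/-- The integrands for which `hankelIntegral β a` converges and does not depend on `a`: holomorphic
on the strip `|Im w| ≤ β` and integrable on its two edges towards `+∞`. -/
structure IsHankelAdmissible (β : ℝ) (F : ℂ → ℂ) : Prop where
  nonneg : 0 ≤ β
  differentiableAt : ∀ w : ℂ, |w.im| ≤ β → DifferentiableAt ℂ F w
  integrableOn_ray : ∀ θ : ℝ, |θ| = β → ∀ a : ℝ,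
    IntegrableOn (fun u : ℝ => F (u + θ * I)) (Set.Ioi a)

namespace IsHankelAdmissible

lemma integrableOn_top (hF : IsHankelAdmissible β F) (a : ℝ) :
    IntegrableOn (fun u : ℝ => F (u + β * I)) (Set.Ioi a) :=
  hF.integrableOn_ray β (abs_of_nonneg hF.nonneg) a

lemma integrableOn_bottom (hF : IsHankelAdmissible β F) (a : ℝ) :
    IntegrableOn (fun u : ℝ => F (u + (-β : ℝ) * I)) (Set.Ioi a) :=
  hF.integrableOn_ray (-β) (by rw [abs_neg, abs_of_nonneg hF.nonneg]) a

lemma continuousOn_vertical (hF : IsHankelAdmissible β F) (a : ℝ) :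
    ContinuousOn (fun θ : ℝ => F (a + θ * I)) (Set.Icc (-β) β) := fun θ hθ =>
  ((hF.differentiableAt (a + θ * I) (by simpa [abs_le] using hθ)).continuousAt.comp
    (f := fun θ : ℝ => (a + θ * I : ℂ)) (by fun_prop)).continuousWithinAt

lemma intervalIntegrable_vertical (hF : IsHankelAdmissible β F) (a : ℝ) :
    IntervalIntegrable (fun θ : ℝ => F (a + θ * I)) volume (-β) β :=
  (hF.continuousOn_vertical a).intervalIntegrable_of_Icc (neg_le_self hF.nonneg)

lemma of_norm_le {K : ℝ} (hG : IsHankelAdmissible β G)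
    (hF : ∀ w : ℂ, |w.im| ≤ β → DifferentiableAt ℂ F w)
    (h : ∀ w : ℂ, |w.im| ≤ β → ‖F w‖ ≤ K * ‖G w‖) : IsHankelAdmissible β F where
  nonneg := hG.nonneg
  differentiableAt := hF
  integrableOn_ray θ hθ a := by
    have ray_mem (u : ℝ) : |(u + θ * I : ℂ).im| ≤ β := by simp [hθ]
    have continuous : Continuous fun u : ℝ => F (u + θ * I) := continuous_iff_continuousAt.2
      fun u => (hF _ (ray_mem u)).continuousAt.comp (f := fun u : ℝ => (u + θ * I : ℂ))
        (by fun_prop)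
    exact ((hG.integrableOn_ray θ hθ a).norm.const_mul K).mono' continuous.aestronglyMeasurable
      (ae_of_all _ fun u => h _ (ray_mem u))

lemma add_const_mul (hF : IsHankelAdmissible β F) (hG : IsHankelAdmissible β G) (c : ℂ) :
    IsHankelAdmissible β fun w => F w + c * G w where
  nonneg := hF.nonneg
  differentiableAt w hw := (hF.differentiableAt w hw).add ((hG.differentiableAt w hw).const_mul c)
  integrableOn_ray θ hθ a :=
    (hF.integrableOn_ray θ hθ a).add ((hG.integrableOn_ray θ hθ a).const_mul c)

end IsHankelAdmissible

lemma hankelIntegral_add_const_mul (hF : IsHankelAdmissible β F) (hG : IsHankelAdmissible β G)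
    (c : ℂ) :
    hankelIntegral β a (fun w => F w + c * G w) =
      hankelIntegral β a F + c * hankelIntegral β a G := by
  unfold hankelIntegral rayIntegral
  rw [integral_add (hF.integrableOn_top a) ((hG.integrableOn_top a).const_mul c),
    integral_add (hF.integrableOn_bottom a) ((hG.integrableOn_bottom a).const_mul c),
    intervalIntegral.integral_add (hF.intervalIntegrable_vertical a)
      ((hG.intervalIntegrable_vertical a).const_mul c)]
  simp only [integral_const_mul, intervalIntegral.integral_const_mul]
  ring

lemma hankelIntegral_congr (hβ : 0 ≤ β) (h : ∀ w : ℂ, |w.im| ≤ β → F w = G w) :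
    hankelIntegral β a F = hankelIntegral β a G := by
  have ray_eq (θ : ℝ) (hθ : |θ| ≤ β) : rayIntegral a θ F = rayIntegral a θ G :=
    integral_congr_ae (ae_of_all _ fun u => h _ (by simpa using hθ))
  have vertical_eq : ∫ θ in (-β)..β, F (a + θ * I) = ∫ θ in (-β)..β, G (a + θ * I) :=
    intervalIntegral.integral_congr fun θ hθ => h _ <| by
      rw [Set.uIcc_of_le (neg_le_self hβ)] at hθ
      simpa [abs_le] using hθ
  simp only [hankelIntegral, vertical_eq, ray_eq β (abs_of_nonneg hβ).le,
    ray_eq (-β) (by rw [abs_neg, abs_of_nonneg hβ])]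

lemma norm_hankelIntegral_le (hG : IsHankelAdmissible β G) {K : ℝ}
    (h : ∀ w : ℂ, |w.im| ≤ β → a ≤ w.re → ‖F w‖ ≤ K * ‖G w‖) :
    ‖hankelIntegral β a F‖ ≤ K * hankelNorm β a G := by
  have norm_ray_le (θ : ℝ) (hθ : |θ| = β) :
      ‖rayIntegral a θ F‖ ≤ K * ∫ u in Set.Ioi a, ‖G (u + θ * I)‖ := by
    rw [← integral_const_mul]
    refine norm_integral_le_of_norm_le ((hG.integrableOn_ray θ hθ a).norm.const_mul K) ?_
    filter_upwards [ae_restrict_mem measurableSet_Ioi] with u hu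
    exact h _ (by simp [hθ]) (by simpa using hu.le)
  have norm_vertical_le :
      ‖∫ θ in (-β)..β, F (a + θ * I)‖ ≤ K * ∫ θ in (-β)..β, ‖G (a + θ * I)‖ := by
    rw [← intervalIntegral.integral_const_mul]
    refine intervalIntegral.norm_integral_le_of_norm_le (neg_le_self hG.nonneg)
      (ae_of_all _ fun θ hθ => h _ ?_ (by simp))
      ((hG.intervalIntegrable_vertical a).norm.const_mul K)
    simpa [abs_le] using Set.Ioc_subset_Icc_self hθ
  have norm_prefactor : ‖(2 * π * I)⁻¹‖ = (2 * π)⁻¹ := by simp [abs_of_pos pi_pos]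
  rw [hankelIntegral, norm_mul, norm_prefactor, hankelNorm, mul_left_comm K]
  refine mul_le_mul_of_nonneg_left ?_ (inv_nonneg.2 two_pi_pos.le)
  rw [mul_add, mul_add]
  refine (norm_add_le _ _).trans (add_le_add ((norm_sub_le _ _).trans (add_le_add ?_ ?_)) ?_)
  · exact norm_ray_le β (abs_of_nonneg hG.nonneg)
  · exact norm_ray_le (-β) (by rw [abs_neg, abs_of_nonneg hG.nonneg])
  · simpa using norm_vertical_le

lemma IsHankelAdmissible.hankelIntegral_eq (hF : IsHankelAdmissible β F) (a b : ℝ) :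
    hankelIntegral β a F = hankelIntegral β b F := by
  have rectangle := Complex.integral_boundary_rect_eq_zero_of_differentiableOn F
    (a + (-β : ℝ) * I) (b + β * I) fun w hw =>
      (hF.differentiableAt w (by
        simpa [Set.uIcc_of_le (neg_le_self hF.nonneg), abs_le] using
          hw.2)).differentiableWithinAt
  have top := intervalIntegral.integral_interval_add_Ioi
    (hF.integrableOn_top a) (hF.integrableOn_top b)
  have bottom := intervalIntegral.integral_interval_add_Ioi
    (hF.integrableOn_bottom a) (hF.integrableOn_bottom b)
  simp only [Complex.add_re, Complex.ofReal_re, Complex.re_ofReal_mul, Complex.I_re, mul_zero,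
    add_zero, Complex.add_im, Complex.ofReal_im, Complex.im_ofReal_mul, Complex.I_im, mul_one,
    zero_add, smul_eq_mul] at rectangle
  unfold hankelIntegral rayIntegral
  rw [← top, ← bottom]
  linear_combination -(2 * π * I)⁻¹ * rectangle

lemma rayIntegral_add_vertical_eq {α : ℝ} {g : ℝ → ℝ} (hαβ : α ≤ β)
    (hF : ∀ w : ℂ, w.im ∈ Set.Icc α β → DifferentiableAt ℂ F w)
    (hα : IntegrableOn (fun u : ℝ => F (u + α * I)) (Set.Ioi a))
    (hβ : IntegrableOn (fun u : ℝ => F (u + β * I)) (Set.Ioi a))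
    (hg : Tendsto g atTop (𝓝 0)) (hFg : ∀ u : ℝ, ∀ θ ∈ Set.Icc α β, ‖F (u + θ * I)‖ ≤ g u) :
    rayIntegral a β F + I * ∫ θ in α..β, F (a + θ * I) = rayIntegral a α F := by
  have rectangle (b : ℝ) :
      (∫ u in a..b, F (u + α * I)) - (∫ u in a..b, F (u + β * I)) +
        I * (∫ θ in α..β, F (b + θ * I)) - I * (∫ θ in α..β, F (a + θ * I)) = 0 := by
    simpa using Complex.integral_boundary_rect_eq_zero_of_differentiableOn F
      (a + α * I) (b + β * I) fun w hw =>
        (hF w (by simpa [Set.uIcc_of_le hαβ] using hw.2)).differentiableWithinAt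
  have far_side : Tendsto (fun b : ℝ => ∫ θ in α..β, F (b + θ * I)) atTop (𝓝 0) := by
    refine squeeze_zero_norm (fun b => ?_) (by simpa using hg.mul_const |β - α|)
    refine intervalIntegral.norm_integral_le_of_norm_le_const fun θ hθ => hFg b θ ?_
    rw [Set.uIoc_of_le hαβ] at hθ
    exact Set.Ioc_subset_Icc_self hθ
  have limit := (((intervalIntegral_tendsto_integral_Ioi a hα tendsto_id).sub
    (intervalIntegral_tendsto_integral_Ioi a hβ tendsto_id)).add
      (far_side.const_mul I)).sub_const (I * ∫ θ in α..β, F (a + θ * I))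
  have := tendsto_nhds_unique (limit.congr rectangle) tendsto_const_nhds
  unfold rayIntegral
  linear_combination -this

lemma hankelIntegral_eq_of_angle_le {g : ℝ → ℝ} (hβγ : β ≤ γ) (hβ : IsHankelAdmissible β F)
    (hγ : IsHankelAdmissible γ F) (hg : Tendsto g atTop (𝓝 0))
    (hFg : ∀ u θ : ℝ, β ≤ |θ| → |θ| ≤ γ → ‖F (u + θ * I)‖ ≤ g u) :
    hankelIntegral β a F = hankelIntegral γ a F := by
  have hβ0 := hβ.nonneg
  have upper : rayIntegral a γ F + I * ∫ θ in β..γ, F (a + θ * I) = rayIntegral a β F :=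
    rayIntegral_add_vertical_eq hβγ
      (fun w hw => hγ.differentiableAt w (abs_le.2 ⟨by linarith [hw.1], hw.2⟩))
      (hβ.integrableOn_top a) (hγ.integrableOn_top a) hg fun u θ hθ => by
        have h : |θ| = θ := abs_of_nonneg (hβ0.trans hθ.1)
        exact hFg u θ (by rw [h]; exact hθ.1) (by rw [h]; exact hθ.2)
  have lower :
      rayIntegral a (-β) F + I * ∫ θ in (-γ)..(-β), F (a + θ * I) = rayIntegral a (-γ) F :=
    rayIntegral_add_vertical_eq (neg_le_neg hβγ)
      (fun w hw => hγ.differentiableAt w (abs_le.2 ⟨hw.1, by linarith [hw.2]⟩))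
      (hγ.integrableOn_bottom a) (hβ.integrableOn_bottom a) hg fun u θ hθ => by
        have h : |θ| = -θ := abs_of_nonpos (by linarith [hθ.2])
        exact hFg u θ (by linarith [hθ.2]) (by linarith [hθ.1])
  have integrable {α δ : ℝ} (hα : -γ ≤ α) (hδ : δ ≤ γ) (hαδ : α ≤ δ) :
      IntervalIntegrable (fun θ : ℝ => F (a + θ * I)) volume α δ :=
    ((hγ.continuousOn_vertical a).mono (Set.Icc_subset_Icc hα hδ)).intervalIntegrable_of_Icc hαδ
  have split : ∫ θ in (-γ)..γ, F (a + θ * I) = (∫ θ in (-γ)..(-β), F (a + θ * I)) +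
      (∫ θ in (-β)..β, F (a + θ * I)) + ∫ θ in β..γ, F (a + θ * I) := by
    rw [intervalIntegral.integral_add_adjacent_intervals,
      intervalIntegral.integral_add_adjacent_intervals] <;> apply integrable <;> linarith
  rw [hankelIntegral, hankelIntegral, split, ← upper, ← lower]
  ring

lemma hankelIntegral_eq_zero_of_hasDerivAt (hF : ∀ w : ℂ, |w.im| ≤ β → HasDerivAt F (G w) w)
    (hG : IsHankelAdmissible β G)
    (hlim : ∀ θ : ℝ, |θ| = β → Tendsto (fun u : ℝ => F (u + θ * I)) atTop (𝓝 0)) :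
    hankelIntegral β a G = 0 := by
  have ray_eq (θ : ℝ) (hθ : |θ| = β) : rayIntegral a θ G = -F (a + θ * I) := by
    have hderiv (u : ℝ) : HasDerivAt (fun u : ℝ => F (u + θ * I)) (G (u + θ * I)) u :=
      ((hF (u + θ * I) (by simp [hθ])).comp_add_const (u : ℂ) (θ * I)).comp_ofReal
    rw [rayIntegral, integral_Ioi_of_hasDerivAt_of_tendsto' (fun u _ => hderiv u)
      (hG.integrableOn_ray θ hθ a) (hlim θ hθ), zero_sub]
  have vertical_eq : I * ∫ θ in (-β)..β, G (a + θ * I) =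
      F (a + β * I) - F (a + (-β : ℝ) * I) := by
    have hderiv (θ : ℝ) (hθ : θ ∈ Set.uIcc (-β) β) :
        HasDerivAt (fun θ : ℝ => F (a + θ * I)) (I * G (a + θ * I)) θ := by
      rw [Set.uIcc_of_le (neg_le_self hG.nonneg)] at hθ
      have hline : HasDerivAt (fun z : ℂ => a + z * I) I θ := by
        simpa using ((hasDerivAt_id (θ : ℂ)).mul_const I).const_add (a : ℂ)
      rw [mul_comm]
      exact ((hF (a + θ * I) (by simpa [abs_le] using hθ)).comp (θ : ℂ) hline).comp_ofReal
    rw [← intervalIntegral.integral_const_mul]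
    exact intervalIntegral.integral_eq_sub_of_hasDerivAt hderiv
      ((hG.intervalIntegrable_vertical a).const_mul I)
  rw [hankelIntegral, ray_eq β (abs_of_nonneg hG.nonneg),
    ray_eq (-β) (by rw [abs_neg, abs_of_nonneg hG.nonneg]), vertical_eq]
  ring

end HankelContour

section HankelKernel

variable {β : ℝ} {w : ℂ}

/-- The integrand `e ^ t * t ^ (-s - 1) dt` of Hankel's formula for `1 / Γ(1 + s)`, written in the
coordinate `w = log t`. -/
noncomputable def hankelKernel (s w : ℂ) : ℂ :=
  Complex.exp (Complex.exp w - s * w)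

lemma differentiable_hankelKernel (s : ℂ) : Differentiable ℂ (hankelKernel s) := by
  unfold hankelKernel
  fun_prop

lemma hankelKernel_add (s t w : ℂ) :
    hankelKernel (s + t) w = Complex.exp (-(t * w)) * hankelKernel s w := by
  rw [hankelKernel, hankelKernel, ← Complex.exp_add]
  ring_nf

lemma norm_hankelKernel (s w : ℂ) :
    ‖hankelKernel s w‖ = exp (exp w.re * cos w.im - s.re * w.re + s.im * w.im) := by
  rw [hankelKernel, Complex.norm_exp, Complex.sub_re, Complex.exp_re, Complex.mul_re]
  ring_nf

lemma norm_hankelKernel_add_le {a t : ℝ} (s : ℂ) (ht : 0 ≤ t) (hw : a ≤ w.re) :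
    ‖hankelKernel (s + t) w‖ ≤ exp (-(t * a)) * ‖hankelKernel s w‖ := by
  rw [hankelKernel_add, norm_mul, Complex.norm_exp, Complex.neg_re, Complex.re_ofReal_mul]
  gcongr

lemma norm_hankelKernel_le (s : ℂ) (hβ : 0 ≤ β) (hw : β ≤ |w.im|) (hwπ : |w.im| ≤ π) :
    ‖hankelKernel s w‖ ≤ exp (|s.im| * π) * exp (cos β * exp w.re - s.re * w.re) := by
  have cos_le : cos w.im ≤ cos β := by
    rw [← cos_abs w.im]
    exact cos_le_cos_of_nonneg_of_le_pi hβ hwπ hw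
  have im_le : s.im * w.im ≤ |s.im| * π :=
    (le_abs_self _).trans (by rw [abs_mul]; gcongr)
  rw [norm_hankelKernel, ← exp_add, exp_le_exp]
  nlinarith [mul_le_mul_of_nonneg_left cos_le (exp_pos w.re).le]

lemma tendsto_exp_mul_exp_sub_mul_atTop {c : ℝ} (hc : c < 0) (σ : ℝ) :
    Tendsto (fun u => exp (c * exp u - σ * u)) atTop (𝓝 0) := by
  refine ((tendsto_rpow_mul_exp_neg_mul_atTop_nhds_zero (-σ) (-c) (neg_pos.2 hc)).comp
    tendsto_exp_atTop).congr fun u => ?_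
  rw [Function.comp_apply, ← exp_mul, ← exp_add]
  ring_nf

lemma integrableOn_exp_mul_exp_sub_mul {c : ℝ} (hc : c < 0) (σ a : ℝ) :
    IntegrableOn (fun u => exp (c * exp u - σ * u)) (Set.Ioi a) := by
  refine integrable_of_isBigO_exp_neg one_pos (by fun_prop) ?_
  refine ((tendsto_exp_mul_exp_sub_mul_atTop hc (σ - 1)).isBigO_one ℝ).mul
    (Asymptotics.isBigO_refl (fun u : ℝ => exp (-1 * u)) atTop) |>.congr (fun u => ?_) (by simp)
  rw [← exp_add]
  ring_nf

lemma isHankelAdmissible_hankelKernel (s : ℂ) (hβ : π / 2 < β) (hβπ : β ≤ π) :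
    IsHankelAdmissible β (hankelKernel s) where
  nonneg := pi_div_two_pos.le.trans hβ.le
  differentiableAt w _ := (differentiable_hankelKernel s).differentiableAt
  integrableOn_ray θ hθ a := by
    have hcos : cos β < 0 := cos_neg_of_pi_div_two_lt_of_lt hβ (by linarith [pi_pos])
    refine ((integrableOn_exp_mul_exp_sub_mul hcos s.re a).const_mul (exp (|s.im| * π))).mono'
      ((differentiable_hankelKernel s).continuous.comp (by fun_prop)).aestronglyMeasurable
      (ae_of_all _ fun u => ?_)
    simpa using norm_hankelKernel_le (w := u + θ * I) s (pi_div_two_pos.le.trans hβ.le)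
      (by simp [hθ]) (by simpa [hθ] using hβπ)

lemma tendsto_hankelKernel_ray {θ : ℝ} (s : ℂ) (hθ : π / 2 < |θ|) (hθπ : |θ| ≤ π) :
    Tendsto (fun u : ℝ => hankelKernel s (u + θ * I)) atTop (𝓝 0) := by
  have hcos : cos |θ| < 0 := cos_neg_of_pi_div_two_lt_of_lt hθ (by linarith [pi_pos])
  refine squeeze_zero_norm (fun u => ?_)
    (by simpa using (tendsto_exp_mul_exp_sub_mul_atTop hcos s.re).const_mul (exp (|s.im| * π)))
  simpa using norm_hankelKernel_le (w := u + θ * I) s (abs_nonneg θ) (by simp) (by simpa using hθπ)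

lemma hankelIntegral_hankelKernel_eq_pi (a : ℝ) (s : ℂ) (hβ : π / 2 < β) (hβπ : β ≤ π) :
    hankelIntegral β a (hankelKernel s) = hankelIntegral π a (hankelKernel s) := by
  have hcos : cos β < 0 := cos_neg_of_pi_div_two_lt_of_lt hβ (by linarith [pi_pos])
  refine hankelIntegral_eq_of_angle_le hβπ (isHankelAdmissible_hankelKernel s hβ hβπ)
    (isHankelAdmissible_hankelKernel s (by linarith [pi_pos]) le_rfl)
    (by simpa using (tendsto_exp_mul_exp_sub_mul_atTop hcos s.re).const_mul (exp (|s.im| * π)))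
    fun u θ hθ hθπ => ?_
  simpa using norm_hankelKernel_le (w := u + θ * I) s (pi_div_two_pos.le.trans hβ.le)
    (by simpa using hθ) (by simpa using hθπ)

lemma hankelIntegral_hankelKernel_sub_one (a : ℝ) (s : ℂ) (hβ : π / 2 < β) (hβπ : β ≤ π) :
    hankelIntegral β a (hankelKernel (s - 1)) = s * hankelIntegral β a (hankelKernel s) := by
  have admissible (t : ℂ) := isHankelAdmissible_hankelKernel t hβ hβπ
  have hderiv (w : ℂ) : HasDerivAt (hankelKernel s)
      (hankelKernel (s - 1) w + -s * hankelKernel s w) w := by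
    have h := ((Complex.hasDerivAt_exp w).sub ((hasDerivAt_id w).const_mul s)).cexp
    convert! h using 1
    rw [sub_eq_add_neg s, hankelKernel_add]
    simp only [hankelKernel, id_eq, Pi.sub_apply]
    ring_nf
  have h := hankelIntegral_eq_zero_of_hasDerivAt (a := a) (fun w _ => hderiv w)
    ((admissible (s - 1)).add_const_mul (admissible s) (-s))
    fun θ hθ => tendsto_hankelKernel_ray s (hθ ▸ hβ) (hθ ▸ hβπ)
  rw [hankelIntegral_add_const_mul (admissible (s - 1)) (admissible s)] at h
  linear_combination h

end HankelKernel

section HankelFormula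

lemma hankelKernel_add_pi_mul_I (s : ℂ) (u : ℝ) :
    hankelKernel s (u + π * I) = Complex.exp (-(π * s * I)) * Complex.exp (-exp u - s * u) := by
  rw [hankelKernel, Complex.exp_add_pi_mul_I, ← Complex.exp_add, Complex.ofReal_exp]
  ring_nf

lemma hankelKernel_sub_pi_mul_I (s : ℂ) (u : ℝ) :
    hankelKernel s (u + (-π : ℝ) * I) =
      Complex.exp (π * s * I) * Complex.exp (-exp u - s * u) := by
  rw [hankelKernel, Complex.ofReal_neg, neg_mul, ← sub_eq_add_neg, Complex.exp_sub_pi_mul_I,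
    ← Complex.exp_add, Complex.ofReal_exp]
  ring_nf

lemma hankelIntegral_pi_hankelKernel (a : ℝ) (s : ℂ) :
    hankelIntegral π a (hankelKernel s) =
      -(Complex.sin (π * s) / π) * (∫ u in Set.Ioi a, Complex.exp (-exp u - s * u)) +
        (2 * π : ℂ)⁻¹ * ∫ θ in (-π)..π, hankelKernel s (a + θ * I) := by
  simp only [hankelIntegral, rayIntegral, hankelKernel_add_pi_mul_I, hankelKernel_sub_pi_mul_I,
    integral_const_mul, Complex.sin, neg_mul]
  generalize (∫ u in Set.Ioi a, Complex.exp (-exp u - s * u)) = J,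
    Complex.exp (π * s * I) = p, Complex.exp (-(π * s * I)) = q
  field_simp
  linear_combination J * (q - p) * Complex.I_sq

lemma integral_hankelKernel_zero_vertical (a : ℝ) :
    ∫ θ in (-π)..π, hankelKernel 0 (a + θ * I) = 2 * π := by
  have mean_value : circleAverage Complex.exp 0 (exp a) = 1 := by
    rw [Complex.differentiable_exp.diffContOnCl.circleAverage, Complex.exp_zero]
  have periodic : Function.Periodic (fun θ => Complex.exp (circleMap 0 (exp a) θ)) (2 * π) :=
    (periodic_circleMap 0 (exp a)).comp Complex.exp
  have shift := periodic.intervalIntegral_add_eq (-π) 0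
  rw [show -π + 2 * π = π by ring, zero_add] at shift
  have kernel_eq (θ : ℝ) : hankelKernel 0 (a + θ * I) = Complex.exp (circleMap 0 (exp a) θ) := by
    rw [hankelKernel, circleMap_zero, Complex.exp_add, Complex.ofReal_exp, zero_mul, sub_zero]
  rw [circleAverage_def, ← shift, inv_smul_eq_iff₀ two_pi_pos.ne'] at mean_value
  simpa [kernel_eq] using mean_value

lemma integral_exp_neg_exp_sub_mul (a : ℝ) (s : ℂ) :
    ∫ u in Set.Ioi a, Complex.exp (-exp u - s * u) =
      ∫ y in Set.Ioi (exp a), (exp (-y) : ℂ) * (y : ℂ) ^ (-s - 1) := by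
  rw [← integral_comp_exp_Ioi]
  congr! 2 with u
  rw [Complex.real_smul, Complex.cpow_def_of_ne_zero (by simp), ← Complex.ofReal_log (exp_pos u).le,
    log_exp, Complex.ofReal_exp u, Complex.ofReal_exp (-exp u), ← Complex.exp_add,
    ← Complex.exp_add, Complex.ofReal_neg, Complex.ofReal_exp]
  ring_nf

lemma tendsto_integral_exp_neg_exp_sub_mul {s : ℂ} (hs : s.re < 0) :
    Tendsto (fun a : ℝ => ∫ u in Set.Ioi a, Complex.exp (-exp u - s * u)) atBot
      (𝓝 (Complex.Gamma (-s))) := by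
  have hs' : 0 < (-s).re := by simpa using hs
  simp only [integral_exp_neg_exp_sub_mul, Complex.Gamma_eq_integral hs']
  exact (Complex.GammaIntegral_convergent hs').continuousWithinAt_Ici_primitive_Ioi.tendsto.comp
    (tendsto_nhdsWithin_iff.2 ⟨tendsto_exp_atBot, Eventually.of_forall fun u => (exp_pos u).le⟩)

lemma tendsto_integral_hankelKernel_vertical {s : ℂ} (hs : s.re < 0) :
    Tendsto (fun a : ℝ => ∫ θ in (-π)..π, hankelKernel s (a + θ * I)) atBot (𝓝 0) := by
  have exponent : Tendsto (fun a => exp a - s.re * a + |s.im| * π) atBot atBot :=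
    tendsto_atBot_add_const_right _ _ (tendsto_exp_atBot.add_atBot (by
      simpa using tendsto_id.const_mul_atBot (neg_pos.2 hs)))
  have bound := (tendsto_exp_atBot.comp exponent).mul_const |π - -π|
  rw [zero_mul] at bound
  refine squeeze_zero_norm (fun a => ?_) bound
  refine intervalIntegral.norm_integral_le_of_norm_le_const fun θ hθ => ?_
  rw [Set.uIoc_of_le (neg_le_self pi_pos.le)] at hθ
  have im_le : s.im * θ ≤ |s.im| * π :=
    (le_abs_self _).trans (by rw [abs_mul]; gcongr; exact abs_le.2 ⟨hθ.1.le, hθ.2⟩)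
  have cos_le : exp a * cos θ ≤ exp a := mul_le_of_le_one_right (exp_pos a).le (cos_le_one θ)
  simpa [norm_hankelKernel] using by linarith

lemma inv_Gamma_one_add_eq {s : ℂ} (hs : s.re < 0) :
    (Complex.Gamma (1 + s))⁻¹ = -(Complex.sin (π * s) / π) * Complex.Gamma (-s) := by
  have reflection := Complex.Gamma_mul_Gamma_one_sub (-s)
  have hne : Complex.Gamma (-s) ≠ 0 := Complex.Gamma_ne_zero_of_re_pos (by simpa using hs)
  rw [sub_neg_eq_add, mul_neg, Complex.sin_neg, ← inv_inj, mul_inv] at reflection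
  rw [← mul_inv_cancel_left₀ hne (Complex.Gamma (1 + s))⁻¹, reflection, inv_div]
  ring

/-- Pushing the vertical side of the contour to `-∞` turns the rays into Euler's integral for
`Γ(-s)`. -/
lemma hankelIntegral_pi_hankelKernel_of_re_neg (a : ℝ) {s : ℂ} (hs : s.re < 0) :
    hankelIntegral π a (hankelKernel s) = (Complex.Gamma (1 + s))⁻¹ := by
  have limit := ((tendsto_integral_exp_neg_exp_sub_mul hs).const_mul
    (-(Complex.sin (π * s) / π))).add
      ((tendsto_integral_hankelKernel_vertical hs).const_mul (2 * π : ℂ)⁻¹)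
  rw [mul_zero, add_zero, ← inv_Gamma_one_add_eq hs] at limit
  refine tendsto_nhds_unique tendsto_const_nhds (limit.congr fun b => ?_)
  rw [← hankelIntegral_pi_hankelKernel]
  exact (isHankelAdmissible_hankelKernel s (by linarith [pi_pos]) le_rfl).hankelIntegral_eq b a

lemma hankelIntegral_pi_hankelKernel_eq_inv_Gamma (a : ℝ) (s : ℂ) :
    hankelIntegral π a (hankelKernel s) = (Complex.Gamma (1 + s))⁻¹ := by
  obtain ⟨n, hn⟩ := exists_nat_gt s.re
  induction n generalizing s with
  | zero => exact hankelIntegral_pi_hankelKernel_of_re_neg a (by simpa using hn)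
  | succ n ih =>
    rcases eq_or_ne s 0 with rfl | hs
    · rw [hankelIntegral_pi_hankelKernel, integral_hankelKernel_zero_vertical,
        inv_mul_cancel₀ (by simp)]
      simp
    · have h := hankelIntegral_hankelKernel_sub_one a s (by linarith [pi_pos]) le_rfl
      rw [ih (s - 1) (by simpa [sub_lt_iff_lt_add] using hn), add_sub_cancel,
        Complex.one_div_Gamma_eq_self_mul_one_div_Gamma_add_one, add_comm s] at h
      exact (mul_left_cancel₀ hs h).symm

theorem hankelIntegral_hankelKernel {β : ℝ} (a : ℝ) (s : ℂ) (hβ : π / 2 < β) (hβπ : β ≤ π) :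
    hankelIntegral β a (hankelKernel s) = (Complex.Gamma (1 + s))⁻¹ := by
  rw [hankelIntegral_hankelKernel_eq_pi a s hβ hβπ, hankelIntegral_pi_hankelKernel_eq_inv_Gamma]

lemma norm_inv_Gamma_one_add_le {t : ℝ} (a : ℝ) (s : ℂ) (ht : 0 ≤ t) :
    ‖(Complex.Gamma (1 + (s + t)))⁻¹‖ ≤ exp (-(t * a)) * hankelNorm π a (hankelKernel s) := by
  have hπ : π / 2 < π := by linarith [pi_pos]
  rw [← hankelIntegral_hankelKernel a (s + t) hπ le_rfl]
  exact norm_hankelIntegral_le (isHankelAdmissible_hankelKernel s hπ le_rfl)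
    fun w _ hw => norm_hankelKernel_add_le s ht hw

end HankelFormula

section MittagLefflerKernel

variable {ν β x : ℝ} {w : ℂ}

/-- The integrand, in the coordinate `w = log t`, of the Hankel-type representation of the
Mittag-Leffler function: `E_ν (-x)` is the integral of `mittagLefflerKernel ν x (-ν)`. The shift `s`
is left free because the identity `k_{s - ν} + x k_s = hankelKernel s` relates different shifts. -/
noncomputable def mittagLefflerKernel (ν x : ℝ) (s w : ℂ) : ℂ :=
  hankelKernel s w / (Complex.exp (ν * w) + x)

lemma cos_half_im_mul_le_norm_exp_add (x : ℝ) (hw : |w.im| ≤ π) :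
    cos (w.im / 2) * x ≤ ‖Complex.exp w + x‖ := by
  have cos_nonneg : 0 ≤ cos (w.im / 2) :=
    cos_nonneg_of_neg_pi_div_two_le_of_le (by linarith [neg_le_of_abs_le hw])
      (by linarith [le_of_abs_le hw])
  -- Rotating by half the argument of `exp w` makes both summands lean towards the positive axis.
  let ρ : ℂ := Complex.exp ((-(w.im / 2) : ℝ) * I)
  have re_eq : (ρ * (Complex.exp w + x)).re = (exp w.re + x) * cos (w.im / 2) := by
    have h : ρ * Complex.exp w = Complex.exp (w.re + (w.im / 2 : ℝ) * I) := by
      rw [← Complex.exp_add]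
      congr 1
      linear_combination (norm := (push_cast; ring)) -Complex.re_add_im w
    rw [mul_add, h, Complex.add_re, Complex.exp_re, Complex.re_mul_ofReal,
      Complex.exp_ofReal_mul_I_re, cos_neg]
    simp only [Complex.add_re, Complex.ofReal_re, Complex.re_ofReal_mul, Complex.I_re, mul_zero,
      add_zero, Complex.add_im, Complex.ofReal_im, Complex.im_ofReal_mul, Complex.I_im, mul_one,
      zero_add]
    ring
  calc cos (w.im / 2) * x ≤ (exp w.re + x) * cos (w.im / 2) := by
        nlinarith [mul_nonneg (exp_pos w.re).le cos_nonneg]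
    _ = (ρ * (Complex.exp w + x)).re := re_eq.symm
    _ ≤ ‖ρ * (Complex.exp w + x)‖ := Complex.re_le_norm _
    _ = ‖Complex.exp w + x‖ := by rw [norm_mul, Complex.norm_exp_ofReal_mul_I, one_mul]

lemma cos_mul_le_norm_exp_mul_add (hν : 0 ≤ ν) (hx : 0 ≤ x) (hνβ : ν * β ≤ π)
    (hw : |w.im| ≤ β) : cos (ν * β / 2) * x ≤ ‖Complex.exp (ν * w) + x‖ := by
  have im_le : |(ν * w : ℂ).im| ≤ ν * β := by
    rw [Complex.im_ofReal_mul, abs_mul, abs_of_nonneg hν]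
    gcongr
  refine le_trans ?_ (cos_half_im_mul_le_norm_exp_add x (im_le.trans hνβ))
  rw [← cos_abs ((ν * w : ℂ).im / 2), abs_div, abs_two]
  gcongr
  exact cos_le_cos_of_nonneg_of_le_pi (by positivity) (by linarith [pi_pos]) (by linarith)

lemma cos_mul_div_two_pos (hν : 0 ≤ ν) (hβ : 0 ≤ β) (hνβ : ν * β < π) : 0 < cos (ν * β / 2) :=
  cos_pos_of_mem_Ioo ⟨by nlinarith [pi_pos, mul_nonneg hν hβ], by linarith⟩

lemma exp_mul_add_ne_zero (hν : 0 ≤ ν) (hx : 0 < x) (hνβ : ν * β < π) (hw : |w.im| ≤ β) :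
    Complex.exp (ν * w) + x ≠ 0 :=
  norm_pos_iff.1 <|
    (mul_pos (cos_mul_div_two_pos hν ((abs_nonneg _).trans hw) hνβ) hx).trans_le
      (cos_mul_le_norm_exp_mul_add hν hx.le hνβ.le hw)

lemma norm_mittagLefflerKernel_le (s : ℂ) (hν : 0 ≤ ν) (hx : 0 < x) (hνβ : ν * β < π)
    (hw : |w.im| ≤ β) :
    ‖mittagLefflerKernel ν x s w‖ ≤ (cos (ν * β / 2) * x)⁻¹ * ‖hankelKernel s w‖ := by
  have cos_pos := cos_mul_div_two_pos hν ((abs_nonneg _).trans hw) hνβ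
  rw [mittagLefflerKernel, norm_div, div_eq_inv_mul]
  gcongr
  exact cos_mul_le_norm_exp_mul_add hν hx.le hνβ.le hw

lemma isHankelAdmissible_mittagLefflerKernel (s : ℂ) (hν : 0 ≤ ν) (hx : 0 < x) (hβ : π / 2 < β)
    (hβπ : β ≤ π) (hνβ : ν * β < π) : IsHankelAdmissible β (mittagLefflerKernel ν x s) :=
  (isHankelAdmissible_hankelKernel s hβ hβπ).of_norm_le
    (fun w hw => (differentiable_hankelKernel s w).div (by fun_prop)
      (exp_mul_add_ne_zero hν hx hνβ hw))
    fun w hw => norm_mittagLefflerKernel_le s hν hx hνβ hw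

lemma hankelIntegral_mittagLefflerKernel_sub (a : ℝ) (s : ℂ) (hν : 0 ≤ ν) (hx : 0 < x)
    (hβ : π / 2 < β) (hβπ : β ≤ π) (hνβ : ν * β < π) :
    hankelIntegral β a (mittagLefflerKernel ν x (s - ν)) =
      (Complex.Gamma (1 + s))⁻¹ - x * hankelIntegral β a (mittagLefflerKernel ν x s) := by
  have admissible (t : ℂ) := isHankelAdmissible_mittagLefflerKernel t hν hx hβ hβπ hνβ
  have kernel_eq (w : ℂ) (hw : |w.im| ≤ β) :
      mittagLefflerKernel ν x (s - ν) w + x * mittagLefflerKernel ν x s w = hankelKernel s w := by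
    have hne := exp_mul_add_ne_zero hν hx hνβ hw
    simp only [mittagLefflerKernel, sub_eq_add_neg s, hankelKernel_add, neg_mul, neg_neg]
    field_simp
  have h := hankelIntegral_congr (a := a) (admissible s).nonneg kernel_eq
  rw [hankelIntegral_add_const_mul (admissible _) (admissible s),
    hankelIntegral_hankelKernel a s hβ hβπ] at h
  linear_combination h

lemma norm_hankelIntegral_mittagLefflerKernel_add_le {t : ℝ} (a : ℝ) (s : ℂ) (ht : 0 ≤ t)
    (hν : 0 ≤ ν) (hx : 0 < x) (hβ : π / 2 < β) (hβπ : β ≤ π) (hνβ : ν * β < π) :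
    ‖hankelIntegral β a (mittagLefflerKernel ν x (s + t))‖ ≤
      (cos (ν * β / 2) * x)⁻¹ * exp (-(t * a)) * hankelNorm β a (hankelKernel s) := by
  refine norm_hankelIntegral_le (isHankelAdmissible_hankelKernel s hβ hβπ) fun w hw hwa => ?_
  have cos_pos := cos_mul_div_two_pos hν ((abs_nonneg _).trans hw) hνβ
  refine (norm_mittagLefflerKernel_le _ hν hx hνβ hw).trans ?_
  rw [mul_assoc]
  gcongr
  exact norm_hankelKernel_add_le s ht hwa

end MittagLefflerKernel

section MittagLeffler

variable {ν β x : ℝ}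

lemma exp_neg_mul_natCast_mul (ν a : ℝ) (n : ℕ) : exp (-(ν * n * a)) = exp (-(ν * a)) ^ n := by
  rw [← exp_nat_mul]
  ring_nf

lemma exists_mul_exp_neg_mul_lt_one (hν : 0 < ν) (x : ℝ) : ∃ a, x * exp (-(ν * a)) < 1 := by
  have decay : Tendsto (fun a => x * exp (-(ν * a))) atTop (𝓝 (x * 0)) :=
    (tendsto_exp_atBot.comp
      (tendsto_neg_atTop_atBot.comp (tendsto_id.const_mul_atTop hν))).const_mul x
  exact (decay.eventually_lt_const (by simp)).exists

lemma hasSum_mittagLeffler (hν : 0 < ν) (x : ℝ) :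
    HasSum (fun k : ℕ => x ^ k / Real.Gamma (ν * k + 1)) (mittagLeffler ν x) := by
  obtain ⟨a, ha⟩ := exists_mul_exp_neg_mul_lt_one hν |x|
  refine (Summable.of_norm_bounded ((summable_geometric_of_lt_one (by positivity) ha).mul_right
    (hankelNorm π a (hankelKernel 0))) fun k => ?_).hasSum
  have h := norm_inv_Gamma_one_add_le a 0 (t := ν * k) (by positivity)
  rw [zero_add, add_comm, ← Complex.ofReal_one, ← Complex.ofReal_add, Complex.Gamma_ofReal,
    ← Complex.ofReal_inv, Complex.norm_real, exp_neg_mul_natCast_mul] at h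
  rw [div_eq_mul_inv, norm_mul, norm_pow, norm_eq_abs, mul_pow, mul_assoc]
  gcongr

lemma hankelIntegral_mittagLefflerKernel_eq_sum_range (a : ℝ) (hν : 0 ≤ ν) (hx : 0 < x)
    (hβ : π / 2 < β) (hβπ : β ≤ π) (hνβ : ν * β < π) (n : ℕ) :
    hankelIntegral β a (mittagLefflerKernel ν x (-ν)) =
      ∑ k ∈ range n, (-x : ℂ) ^ k / Complex.Gamma (ν * k + 1) +
        (-x) ^ n * hankelIntegral β a (mittagLefflerKernel ν x (-ν + (ν * n : ℝ))) := by
  induction n with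
  | zero => simp
  | succ n ih =>
    have recursion := hankelIntegral_mittagLefflerKernel_sub a (ν * n) hν hx hβ hβπ hνβ
    have shift : -ν + ((ν * n : ℝ) : ℂ) = ν * n - ν := by push_cast; ring
    have shift' : -ν + ((ν * (n + 1 : ℕ) : ℝ) : ℂ) = ν * n := by push_cast; ring
    rw [ih, sum_range_succ, shift, shift', recursion, add_comm 1]
    ring

lemma hankelIntegral_mittagLefflerKernel_eq_sum_Icc (a : ℝ) (hν : 0 ≤ ν) (hx : 0 < x)
    (hβ : π / 2 < β) (hβπ : β ≤ π) (hνβ : ν * β < π) (N : ℕ) :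
    hankelIntegral β a (mittagLefflerKernel ν x (-ν)) =
      ∑ n ∈ Icc 1 N, (-1 : ℂ) ^ (n - 1) * (x ^ n : ℂ)⁻¹ / Complex.Gamma (1 - ν * n) +
        (-1) ^ N * (x ^ N : ℂ)⁻¹ *
          hankelIntegral β a (mittagLefflerKernel ν x (-(ν * (N + 1)))) := by
  induction N with
  | zero => simp
  | succ N ih =>
    have recursion := hankelIntegral_mittagLefflerKernel_sub a (-(ν * (N + 1))) hν hx hβ hβπ hνβ
    have shift : -(ν * (N + 1) : ℂ) - ν = -(ν * ((N + 1 : ℕ) + 1)) := by push_cast; ring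
    rw [shift] at recursion
    have hx' : (x : ℂ) ≠ 0 := Complex.ofReal_ne_zero.2 hx.ne'
    rw [ih, sum_Icc_succ_top (Nat.le_add_left 1 N), recursion, Nat.add_sub_cancel, ← sub_eq_add_neg]
    push_cast
    field_simp
    ring

theorem mittagLeffler_neg_eq_hankelIntegral (a : ℝ) (hν : 0 < ν) (hx : 0 < x) (hβ : π / 2 < β)
    (hβπ : β ≤ π) (hνβ : ν * β < π) :
    (mittagLeffler ν (-x) : ℂ) = hankelIntegral β a (mittagLefflerKernel ν x (-ν)) := by
  obtain ⟨b, hb⟩ := exists_mul_exp_neg_mul_lt_one hν x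
  let remainder (n : ℕ) : ℂ :=
    (-x) ^ n * hankelIntegral β b (mittagLefflerKernel ν x (-ν + (ν * n : ℝ)))
  have remainder_le (n : ℕ) : ‖remainder n‖ ≤ (x * exp (-(ν * b))) ^ n *
      ((cos (ν * β / 2) * x)⁻¹ * hankelNorm β b (hankelKernel (-ν))) := by
    have h := norm_hankelIntegral_mittagLefflerKernel_add_le b (-ν) (t := ν * n) (by positivity)
      hν.le hx hβ hβπ hνβ
    rw [exp_neg_mul_natCast_mul] at h
    rw [norm_mul, norm_pow, norm_neg, Complex.norm_of_nonneg hx.le]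
    exact (mul_le_mul_of_nonneg_left h (by positivity)).trans_eq (by ring)
  have remainder_tendsto : Tendsto remainder atTop (𝓝 0) :=
    squeeze_zero_norm remainder_le (by
      simpa using (tendsto_pow_atTop_nhds_zero_of_lt_one (by positivity) hb).mul_const _)
  have partial_sums : Tendsto (fun n => ∑ k ∈ range n, (-x : ℂ) ^ k / Complex.Gamma (ν * k + 1))
      atTop (𝓝 (hankelIntegral β b (mittagLefflerKernel ν x (-ν)))) := by
    have h := remainder_tendsto.const_sub (hankelIntegral β b (mittagLefflerKernel ν x (-ν)))
    rw [sub_zero] at h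
    refine h.congr fun n => ?_
    rw [hankelIntegral_mittagLefflerKernel_eq_sum_range b hν.le hx hβ hβπ hνβ n]
    exact add_sub_cancel_right _ _
  rw [(isHankelAdmissible_mittagLefflerKernel (-ν) hν.le hx hβ hβπ hνβ).hankelIntegral_eq a b]
  refine tendsto_nhds_unique (Complex.hasSum_ofReal.2
    (hasSum_mittagLeffler hν (-x))).tendsto_sum_nat (partial_sums.congr fun n => ?_)
  simp [← Complex.Gamma_ofReal]

lemma exists_hankelAngle (hν : ν ∈ Set.Ioo (0 : ℝ) 2) : ∃ β, π / 2 < β ∧ β ≤ π ∧ ν * β < π := by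
  have hlt : π / 2 < min π (π / ν) :=
    lt_min (half_lt_self pi_pos) (div_lt_div_of_pos_left pi_pos hν.1 hν.2)
  obtain ⟨β, hβ, hβ'⟩ := exists_between hlt
  exact ⟨β, hβ, (hβ'.trans_le (min_le_left _ _)).le,
    (lt_div_iff₀' hν.1).1 (hβ'.trans_le (min_le_right _ _))⟩

lemma mittagLeffler_neg_sub_sum_eq (a : ℝ) (hν : 0 < ν) (hx : 0 < x) (hβ : π / 2 < β)
    (hβπ : β ≤ π) (hνβ : ν * β < π) (N : ℕ) :
    ((mittagLeffler ν (-x) - ∑ n ∈ Icc 1 N,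
        (-1 : ℝ) ^ (n - 1) * x ^ (-(n : ℝ)) / Real.Gamma (1 - ν * n) : ℝ) : ℂ) =
      (-1) ^ N * (x ^ N : ℂ)⁻¹ *
        hankelIntegral β a (mittagLefflerKernel ν x (-(ν * (N + 1)))) := by
  have terms : (∑ n ∈ Icc 1 N,
      (-1 : ℝ) ^ (n - 1) * x ^ (-(n : ℝ)) / Real.Gamma (1 - ν * n) : ℝ) =
        ∑ n ∈ Icc 1 N, (-1 : ℂ) ^ (n - 1) * (x ^ n : ℂ)⁻¹ / Complex.Gamma (1 - ν * n) := by
    simp only [rpow_neg hx.le, rpow_natCast]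
    push_cast [← Complex.Gamma_ofReal]
    rfl
  rw [Complex.ofReal_sub, terms, mittagLeffler_neg_eq_hankelIntegral a hν hx hβ hβπ hνβ,
    hankelIntegral_mittagLefflerKernel_eq_sum_Icc a hν.le hx hβ hβπ hνβ N, add_sub_cancel_left]

lemma abs_mittagLeffler_neg_sub_sum_le (hν : 0 < ν) (hx : 0 < x) (hβ : π / 2 < β) (hβπ : β ≤ π)
    (hνβ : ν * β < π) (N : ℕ) :
    |mittagLeffler ν (-x) - ∑ n ∈ Icc 1 N,
        (-1 : ℝ) ^ (n - 1) * x ^ (-(n : ℝ)) / Real.Gamma (1 - ν * n)| ≤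
      (cos (ν * β / 2))⁻¹ * hankelNorm β 0 (hankelKernel (-(ν * (N + 1)))) *
        x ^ (-(N + 1 : ℝ)) := by
  have h := norm_hankelIntegral_mittagLefflerKernel_add_le 0 (-(ν * (N + 1))) le_rfl hν.le hx
    hβ hβπ hνβ
  rw [Complex.ofReal_zero, add_zero, zero_mul, neg_zero, exp_zero, mul_one, mul_inv] at h
  have power_eq : x ^ (-(N + 1 : ℝ)) = (x ^ N)⁻¹ * x⁻¹ := by
    rw [← mul_inv, ← pow_succ, rpow_neg hx.le, ← Nat.cast_succ, rpow_natCast]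
  rw [← norm_eq_abs, ← Complex.norm_real, mittagLeffler_neg_sub_sum_eq 0 hν hx hβ hβπ hνβ,
    norm_mul, norm_mul, norm_pow, norm_neg, norm_one, one_pow, one_mul, norm_inv, norm_pow,
    Complex.norm_of_nonneg hx.le, power_eq]
  exact (mul_le_mul_of_nonneg_left h (by positivity)).trans_eq (by ring)

theorem mittagLeffler_asymptotic_expansion_general (ν : ℝ) (hν : ν ∈ Set.Ioo (0 : ℝ) 2) (N : ℕ) :
    (fun x : ℝ => mittagLeffler ν (-x) -
        ∑ n ∈ Icc 1 N, (-1 : ℝ) ^ (n - 1) * x ^ (-(n : ℝ)) / Real.Gamma (1 - ν * n))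
      =O[atTop] fun x : ℝ => x ^ (-(N + 1 : ℝ)) := by
  obtain ⟨β, hβ, hβπ, hνβ⟩ := exists_hankelAngle hν
  refine Asymptotics.IsBigO.of_bound
    ((cos (ν * β / 2))⁻¹ * hankelNorm β 0 (hankelKernel (-(ν * (N + 1))))) ?_
  filter_upwards [eventually_gt_atTop 0] with x hx
  rw [norm_eq_abs, norm_of_nonneg (rpow_nonneg hx.le _)]
  exact abs_mittagLeffler_neg_sub_sum_le hν.1 hx hβ hβπ hνβ N

lemma tendsto_rpow_mul_of_isBigO {f : ℝ → ℝ} {r s : ℝ} (hrs : r < s)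
    (hf : f =O[atTop] fun x => x ^ (-s)) : Tendsto (fun x => x ^ r * f x) atTop (𝓝 0) := by
  refine ((Asymptotics.isBigO_refl (fun x : ℝ => x ^ r) atTop).mul hf).trans_tendsto ?_
  refine (tendsto_rpow_neg_atTop (sub_pos.2 hrs)).congr' ?_
  filter_upwards [eventually_gt_atTop 0] with x hx
  rw [← rpow_add hx]
  ring_nf

end MittagLeffler

/-- For `ν ∈ (0,1)` and `N ≥ 1`, the asymptotic expansion
`E_ν(−x) = ∑_{n=1}^{N} (−1)^{n−1} x^{−n}/Γ(1−νn) + o(x^{−N})` as `x → +∞`.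
(In Mathlib `Real.Gamma` vanishes at nonpositive integers, so `1/Γ(1−νn) = 0`
there, matching the stated convention.) -/
theorem mittagLeffler_asymptotic_expansion (ν : ℝ) (hν : ν ∈ Set.Ioo (0:ℝ) 1)
    (N : ℕ) (hN : 1 ≤ N) :
    Tendsto (fun x : ℝ => x ^ (N : ℝ) *
        (mittagLeffler ν (-x) -
          ∑ n ∈ Finset.Icc 1 N,
            (-1 : ℝ) ^ (n - 1) * x ^ (-(n : ℝ)) / Real.Gamma (1 - ν * n)))
      atTop (nhds 0) :=
  tendsto_rpow_mul_of_isBigO (lt_add_one (N : ℝ))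
    (mittagLeffler_asymptotic_expansion_general ν ⟨hν.1, hν.2.trans one_lt_two⟩ N)
end

section
/- The composition of two Bernstein functions is a Bernstein function: if f, g : ℝ → ℝ are infinitely differentiable on (0,∞), g is a Bernstein function on (0,∞) with g(x) > 0 for all x > 0, and f is a Bernstein function on (0,∞), then f ∘ g is a Bernstein function on (0,∞), i.e. (f∘g)(x) ≥ 0 for all x > 0 and (−1)^{n−1} · (dⁿ/dxⁿ)(f∘g)(x) ≥ 0 for every integer n ≥ 1 and every x > 0. -/
open Real Set

/-!
For `n ≥ 1` the central reflection `x ↦ -f (-x)` of `f` has `n`-th derivative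
`(-1) ^ (n - 1) * f⁽ⁿ⁾ (-x)`, so the sign conditions on a Bernstein function say that all
derivatives of positive order of its reflection are nonnegative. Reflection commutes with
composition, and nonnegativity of these derivatives is inherited by compositions because every term
of Faà di Bruno's formula is a product of such derivatives.
-/

theorem iteratedDeriv_comp_nonneg {f g : ℝ → ℝ} {x : ℝ} {n : ℕ} (hn : 1 ≤ n)
    (hf_smooth : ContDiffAt ℝ n f (g x)) (hg_smooth : ContDiffAt ℝ n g x)
    (hf : ∀ k, 1 ≤ k → k ≤ n → 0 ≤ iteratedDeriv k f (g x))
    (hg : ∀ k, 1 ≤ k → k ≤ n → 0 ≤ iteratedDeriv k g x) :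
    0 ≤ iteratedDeriv n (f ∘ g) x := by
  rw [iteratedDeriv_comp_eq_sum_orderedFinpartition hf_smooth hg_smooth le_rfl]
  exact Finset.sum_nonneg fun c _ ↦ mul_nonneg (hf c.length (c.length_pos hn) c.length_le)
    (Finset.prod_nonneg fun j _ ↦ hg (c.partSize j) (c.partSize_pos j) (c.partSize_le j))

/-- The function `x ↦ -f (-x)`, whose graph is the reflection of the graph of `f` in the origin.
It turns alternating signs of the derivatives of positive order into nonnegativity. -/
def centralReflection {E F : Type*} [Neg E] [Neg F] (f : E → F) (x : E) : F :=
  -f (-x)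

theorem centralReflection_neg {E F : Type*} [InvolutiveNeg E] [Neg F] (f : E → F) (x : E) :
    centralReflection f (-x) = -f x := by
  rw [centralReflection, neg_neg]

theorem centralReflection_comp {E F G : Type*} [Neg E] [InvolutiveNeg F] [Neg G]
    (f : F → G) (g : E → F) :
    centralReflection (f ∘ g) = centralReflection f ∘ centralReflection g :=
  funext fun x ↦ (centralReflection_neg f (g (-x))).symm

theorem contDiffAt_centralReflection_neg {𝕜 E F : Type*} [NontriviallyNormedField 𝕜]
    [NormedAddCommGroup E] [NormedSpace 𝕜 E] [NormedAddCommGroup F] [NormedSpace 𝕜 F]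
    {n : WithTop ℕ∞} {f : E → F} {x : E} (hf : ContDiffAt 𝕜 n f x) :
    ContDiffAt 𝕜 n (centralReflection f) (-x) :=
  (ContDiffAt.comp (-x) (by rwa [neg_neg]) contDiff_neg.contDiffAt).neg

theorem iteratedDeriv_centralReflection_neg {𝕜 F : Type*} [NontriviallyNormedField 𝕜]
    [NormedAddCommGroup F] [NormedSpace 𝕜 F] {n : ℕ} (hn : 1 ≤ n) (f : 𝕜 → F) (x : 𝕜) :
    iteratedDeriv n (centralReflection f) (-x) = (-1 : 𝕜) ^ (n - 1) • iteratedDeriv n f x := by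
  obtain ⟨m, rfl⟩ := Nat.exists_eq_add_of_le' hn
  calc iteratedDeriv (m + 1) (fun y ↦ -f (-y)) (-x)
      = -((-1 : 𝕜) ^ (m + 1) • iteratedDeriv (m + 1) f x) := by
        rw [iteratedDeriv_fun_neg, iteratedDeriv_comp_neg, neg_neg]
    _ = (-1 : 𝕜) ^ m • iteratedDeriv (m + 1) f x := by
        rw [pow_succ, mul_neg_one, neg_smul, neg_neg]

theorem neg_one_pow_mul_iteratedDeriv_comp_nonneg {f g : ℝ → ℝ} {x : ℝ} {n : ℕ} (hn : 1 ≤ n)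
    (hf_smooth : ContDiffAt ℝ n f (g x)) (hg_smooth : ContDiffAt ℝ n g x)
    (hf : ∀ k, 1 ≤ k → k ≤ n → 0 ≤ (-1 : ℝ) ^ (k - 1) * iteratedDeriv k f (g x))
    (hg : ∀ k, 1 ≤ k → k ≤ n → 0 ≤ (-1 : ℝ) ^ (k - 1) * iteratedDeriv k g x) :
    0 ≤ (-1 : ℝ) ^ (n - 1) * iteratedDeriv n (f ∘ g) x := by
  simp only [← smul_eq_mul] at hf hg ⊢
  rw [← iteratedDeriv_centralReflection_neg hn, centralReflection_comp]
  apply iteratedDeriv_comp_nonneg hn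
  · rw [centralReflection_neg]
    exact contDiffAt_centralReflection_neg hf_smooth
  · exact contDiffAt_centralReflection_neg hg_smooth
  · intro k hk hkn
    rw [centralReflection_neg, iteratedDeriv_centralReflection_neg hk]
    exact hf k hk hkn
  · intro k hk hkn
    rw [iteratedDeriv_centralReflection_neg hk]
    exact hg k hk hkn

theorem bernstein_comp_bernstein_general {f g : ℝ → ℝ} {s t : Set ℝ}
    (hs : IsOpen s) (ht : IsOpen t)
    (hf_smooth : ContDiffOn ℝ (⊤ : ℕ∞) f t) (hg_smooth : ContDiffOn ℝ (⊤ : ℕ∞) g s)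
    (hg_maps : MapsTo g s t)
    (hg_bern : ∀ n : ℕ, 1 ≤ n → ∀ x ∈ s, 0 ≤ (-1 : ℝ) ^ (n - 1) * iteratedDeriv n g x)
    (hf_nonneg : ∀ x ∈ t, 0 ≤ f x)
    (hf_bern : ∀ n : ℕ, 1 ≤ n → ∀ x ∈ t, 0 ≤ (-1 : ℝ) ^ (n - 1) * iteratedDeriv n f x) :
    ContDiffOn ℝ (⊤ : ℕ∞) (f ∘ g) s ∧
    (∀ x ∈ s, 0 ≤ (f ∘ g) x) ∧
    ∀ n : ℕ, 1 ≤ n → ∀ x ∈ s, 0 ≤ (-1 : ℝ) ^ (n - 1) * iteratedDeriv n (f ∘ g) x := by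
  refine ⟨hf_smooth.comp hg_smooth hg_maps, fun x hx ↦ hf_nonneg (g x) (hg_maps hx),
    fun n hn x hx ↦ ?_⟩
  have hn_le : (n : WithTop ℕ∞) ≤ (⊤ : ℕ∞) := by exact_mod_cast le_top
  exact neg_one_pow_mul_iteratedDeriv_comp_nonneg hn
    ((hf_smooth.contDiffAt (ht.mem_nhds (hg_maps hx))).of_le hn_le)
    ((hg_smooth.contDiffAt (hs.mem_nhds hx)).of_le hn_le)
    (fun k hk _ ↦ hf_bern k hk (g x) (hg_maps hx)) (fun k hk _ ↦ hg_bern k hk x hx)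

/-- The composition of two Bernstein functions is a Bernstein function:
if `g` is Bernstein on `(0,∞)` with `g > 0` there, and `f` is Bernstein on `(0,∞)`,
then `f ∘ g` is Bernstein on `(0,∞)`. -/
theorem bernstein_comp_bernstein (f g : ℝ → ℝ)
    (hf_smooth : ContDiffOn ℝ (⊤ : ℕ∞) f (Set.Ioi 0))
    (hg_smooth : ContDiffOn ℝ (⊤ : ℕ∞) g (Set.Ioi 0))
    (hg_pos : ∀ x : ℝ, 0 < x → 0 < g x)
    (hg_bern : ∀ n : ℕ, 1 ≤ n → ∀ x : ℝ, 0 < x →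
      0 ≤ (-1 : ℝ) ^ (n - 1) * iteratedDeriv n g x)
    (hf_nonneg : ∀ x : ℝ, 0 < x → 0 ≤ f x)
    (hf_bern : ∀ n : ℕ, 1 ≤ n → ∀ x : ℝ, 0 < x →
      0 ≤ (-1 : ℝ) ^ (n - 1) * iteratedDeriv n f x) :
    ContDiffOn ℝ (⊤ : ℕ∞) (f ∘ g) (Set.Ioi 0) ∧
    (∀ x : ℝ, 0 < x → 0 ≤ (f ∘ g) x) ∧
    ∀ n : ℕ, 1 ≤ n → ∀ x : ℝ, 0 < x →
      0 ≤ (-1 : ℝ) ^ (n - 1) * iteratedDeriv n (f ∘ g) x :=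
  bernstein_comp_bernstein_general isOpen_Ioi isOpen_Ioi hf_smooth hg_smooth hg_pos hg_bern
    hf_nonneg hf_bern
end

section
/- The composition of a completely monotone function with a Bernstein function is completely monotone: if f : ℝ → ℝ is completely monotone on (0,∞) and g : ℝ → ℝ is a Bernstein function on (0,∞) with g(x) > 0 for all x > 0, then f ∘ g is completely monotone on (0,∞), i.e. (−1)^n · (dⁿ/dxⁿ)(f∘g)(x) ≥ 0 for every integer n ≥ 0 and every x > 0. -/
open Real Set

/-!
By Faà di Bruno's formula, `(f ∘ g)⁽ⁿ⁾` is a sum over the partitions of `{1, …, n}`, a partition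
into blocks of sizes `m₁, …, mₖ` contributing `f⁽ᵏ⁾(g x) * ∏ g⁽ᵐʲ⁾(x)`. Since
`n = k + ∑ (mⱼ - 1)`, the sign `(-1) ^ n` splits as `(-1) ^ k * ∏ (-1) ^ (mⱼ - 1)`, which makes
every factor of every summand nonnegative.
-/

open scoped ContDiff

theorem pow_eq_pow_length_mul_prod_pow_partSize_sub_one {M : Type*} [CommMonoid M] {n : ℕ}
    (c : OrderedFinpartition n) (a : M) :
    a ^ n = a ^ c.length * ∏ j, a ^ (c.partSize j - 1) :=
  calc
    a ^ n = ∏ j, a ^ c.partSize j := by simpa using (c.prod_sigma_eq_prod fun _ ↦ a).symm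
    _ = ∏ j, a * a ^ (c.partSize j - 1) := by
      simp only [mul_pow_sub_one (c.partSize_pos _).ne']
    _ = a ^ c.length * ∏ j, a ^ (c.partSize j - 1) := by simp [Finset.prod_mul_distrib]

section OrderedNormedSpace

variable {E : Type*} [NormedAddCommGroup E] [NormedSpace ℝ E] [Preorder E]
  {f : ℝ → E} {g : ℝ → ℝ} {s t : Set ℝ}

theorem neg_one_pow_smul_iteratedDerivWithin_comp_nonneg [IsOrderedAddMonoid E] [PosSMulMono ℝ E]
    {n : ℕ} {x : ℝ} (hs : UniqueDiffOn ℝ s) (ht : UniqueDiffOn ℝ t) (hst : MapsTo g s t)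
    (hx : x ∈ s) (hf : ContDiffWithinAt ℝ n f t (g x)) (hg : ContDiffWithinAt ℝ n g s x)
    (hf_sign : ∀ k ≤ n, 0 ≤ (-1 : ℝ) ^ k • iteratedDerivWithin k f t (g x))
    (hg_sign : ∀ m < n, 0 ≤ (-1 : ℝ) ^ m * iteratedDerivWithin (m + 1) g s x) :
    0 ≤ (-1 : ℝ) ^ n • iteratedDerivWithin n (f ∘ g) s x := by
  rw [iteratedDerivWithin_scomp_eq_sum_orderedFinpartition hf hg ht hs hx hst le_rfl,
    Finset.smul_sum]
  refine Finset.sum_nonneg fun c _ ↦ ?_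
  have factor_nonneg (j : Fin c.length) :
      0 ≤ (-1 : ℝ) ^ (c.partSize j - 1) * iteratedDerivWithin (c.partSize j) g s x := by
    simpa only [Nat.sub_add_cancel (c.partSize_pos j)] using
      hg_sign (c.partSize j - 1) (Nat.sub_one_lt_of_le (c.partSize_pos j) (c.partSize_le j))
  calc
    0 ≤ (∏ j, (-1 : ℝ) ^ (c.partSize j - 1) * iteratedDerivWithin (c.partSize j) g s x) •
          (-1 : ℝ) ^ c.length • iteratedDerivWithin c.length f t (g x) :=
      smul_nonneg (Finset.prod_nonneg fun j _ ↦ factor_nonneg j) (hf_sign c.length c.length_le)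
    _ = (-1 : ℝ) ^ n • (∏ j, iteratedDerivWithin (c.partSize j) g s x) •
          iteratedDerivWithin c.length f t (g x) := by
      rw [pow_eq_pow_length_mul_prod_pow_partSize_sub_one c, Finset.prod_mul_distrib]
      module

/-- Complete monotonicity on an arbitrary set, for functions with values in an ordered normed
space. Derivatives are taken within `s`, which includes one-sided derivatives at endpoints; the
notion is meant for sets with `UniqueDiffOn ℝ s`. -/
def CompletelyMonotoneOn (f : ℝ → E) (s : Set ℝ) : Prop :=
  ContDiffOn ℝ ∞ f s ∧ ∀ n : ℕ, ∀ x ∈ s, 0 ≤ (-1 : ℝ) ^ n • iteratedDerivWithin n f s x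

theorem completelyMonotoneOn_iff_of_isOpen (hs : IsOpen s) :
    CompletelyMonotoneOn f s ↔
      ContDiffOn ℝ ∞ f s ∧ ∀ n : ℕ, ∀ x ∈ s, 0 ≤ (-1 : ℝ) ^ n • iteratedDeriv n f x := by
  refine and_congr_right fun _ ↦ forall₃_congr fun n x hx ↦ ?_
  rw [iteratedDerivWithin_of_isOpen hs hx]

theorem completelyMonotoneOn_derivWithin_of_isOpen (hs : IsOpen s) (hf : ContDiffOn ℝ ∞ f s)
    (hsign : ∀ n : ℕ, 1 ≤ n → ∀ x ∈ s, 0 ≤ (-1 : ℝ) ^ (n - 1) • iteratedDeriv n f x) :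
    CompletelyMonotoneOn (derivWithin f s) s := by
  refine ⟨((contDiffOn_infty_iff_derivWithin hs.uniqueDiffOn).1 hf).2, fun n x hx ↦ ?_⟩
  rw [← iteratedDerivWithin_succ', iteratedDerivWithin_of_isOpen hs hx]
  exact hsign (n + 1) (by simp) x hx

theorem completelyMonotone_comp_bernstein_general [IsOrderedAddMonoid E] [PosSMulMono ℝ E]
    (hs : UniqueDiffOn ℝ s) (ht : UniqueDiffOn ℝ t) (hf : CompletelyMonotoneOn f t)
    (hg : DifferentiableOn ℝ g s) (hg' : CompletelyMonotoneOn (derivWithin g s) s)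
    (hst : MapsTo g s t) :
    CompletelyMonotoneOn (f ∘ g) s := by
  have hg_smooth : ContDiffOn ℝ ∞ g s := (contDiffOn_infty_iff_derivWithin hs).2 ⟨hg, hg'.1⟩
  refine ⟨hf.1.comp hg_smooth hst, fun n x hx ↦ ?_⟩
  refine neg_one_pow_smul_iteratedDerivWithin_comp_nonneg hs ht hst hx
    ((hf.1 (g x) (hst hx)).of_le (mod_cast le_top)) ((hg_smooth x hx).of_le (mod_cast le_top))
    (fun k _ ↦ hf.2 k (g x) (hst hx)) fun m _ ↦ ?_
  rw [iteratedDerivWithin_succ']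
  exact hg'.2 m x hx

end OrderedNormedSpace

/-- The composition of a completely monotone function with a Bernstein
function is completely monotone: if `f` is completely monotone on `(0,∞)` and `g` is
Bernstein on `(0,∞)` with `g > 0` there, then `f ∘ g` is completely monotone on `(0,∞)`. -/
theorem completelyMonotone_comp_bernstein (f g : ℝ → ℝ)
    (hf_smooth : ContDiffOn ℝ (⊤ : ℕ∞) f (Set.Ioi 0))
    (hf_cm : ∀ n : ℕ, ∀ x : ℝ, 0 < x → 0 ≤ (-1 : ℝ) ^ n * iteratedDeriv n f x)
    (hg_smooth : ContDiffOn ℝ (⊤ : ℕ∞) g (Set.Ioi 0))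
    (hg_nonneg : ∀ x : ℝ, 0 < x → 0 ≤ g x)
    (hg_pos : ∀ x : ℝ, 0 < x → 0 < g x)
    (hg_bern : ∀ n : ℕ, 1 ≤ n → ∀ x : ℝ, 0 < x →
      0 ≤ (-1 : ℝ) ^ (n - 1) * iteratedDeriv n g x) :
    ContDiffOn ℝ (⊤ : ℕ∞) (f ∘ g) (Set.Ioi 0) ∧
    ∀ n : ℕ, ∀ x : ℝ, 0 < x → 0 ≤ (-1 : ℝ) ^ n * iteratedDeriv n (f ∘ g) x := by
  have hf : CompletelyMonotoneOn f (Ioi 0) :=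
    (completelyMonotoneOn_iff_of_isOpen isOpen_Ioi).2 ⟨hf_smooth, hf_cm⟩
  have hg' : CompletelyMonotoneOn (derivWithin g (Ioi 0)) (Ioi 0) :=
    completelyMonotoneOn_derivWithin_of_isOpen isOpen_Ioi hg_smooth hg_bern
  exact (completelyMonotoneOn_iff_of_isOpen isOpen_Ioi).1 <|
    completelyMonotone_comp_bernstein_general (uniqueDiffOn_Ioi 0) (uniqueDiffOn_Ioi 0) hf
      (hg_smooth.differentiableOn (by simp)) hg' hg_pos
end
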